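/- arXiv:2011.12778 — 2 statements merged into one kernel-verified Lean document; each statement's English description precedes it below -/
import Mathlib

section
/- Assume Π > 0 and Γ > 0 at every (x,y) ∈ U × (ℝⁿ∖{0}). Then the (α,β,γ)-metric F is projectively flat on U, i.e. (∂²F/∂x^k∂y^j)·y^k − ∂F/∂x^j = 0 on U × (ℝⁿ∖{0}) for every j, if and only if at every (x,y) ∈ U × (ℝⁿ∖{0}) and every j: ^αh_{ij}·^αG^i + (α/Π)·[Ψ_s·^βs_{j0} + Ψ_s̄·^γs_{j0}] + (1/(2Γ))·[Γ₁·h_j + Γ₂·h̄_j] = 0, where ^αh_{ij} = a_{ij} − α_iα_j with α_i = ∂α/∂y^i, h_j = b_j − s·α_j, h̄_j = γ_j − s̄·α_j, Γ₁ = [Ψ_ss + (g²−s̄²)J]·R^β + [Ψ_ss̄ − (θ−ss̄)J]·R^γ, Γ₂ = [Ψ_s̄s̄ + (b²−s²)J]·R^γ + [Ψ_ss̄ − (θ−ss̄)J]·R^β, R^β = ^βr_00 − (2α/Π)[Ψ_s·^βs_0 + Ψ_s̄·^γs̄_0], R^γ = ^γr_00 − (2α/Π)[Ψ_s·^βs̄_0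 + Ψ_s̄·^γs_0]. -/
noncomputable section

open Set

/-- `a^{ij} u_i v_j` : the pairing of two covectors via the inverse matrix. -/
def quadInv {n : ℕ} (a : Matrix (Fin n) (Fin n) ℝ) (u v : Fin n → ℝ) : ℝ :=
  ∑ i, ∑ j, a⁻¹ i j * u i * v j

/-- `α(y) = √(a_{ij} y^i y^j)`. -/
def alph {n : ℕ} (a : Matrix (Fin n) (Fin n) ℝ) (y : Fin n → ℝ) : ℝ :=
  Real.sqrt (∑ i, ∑ j, a i j * y i * y j)

/-- `v_i y^i`. -/
def oneForm {n : ℕ} (v y : Fin n → ℝ) : ℝ := ∑ i, v i * y i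

/-- `s(y) = v_i y^i / α(y)`. -/
def sVar {n : ℕ} (a : Matrix (Fin n) (Fin n) ℝ) (v y : Fin n → ℝ) : ℝ :=
  oneForm v y / alph a y

/-- The (α,β,γ)-metric `F(y) = α·Ψ(s, s̄)`. -/
def Fm {n : ℕ} (a : Matrix (Fin n) (Fin n) ℝ) (bv gv : Fin n → ℝ)
    (Ψ : ℝ → ℝ → ℝ) (y : Fin n → ℝ) : ℝ :=
  alph a y * Ψ (sVar a bv y) (sVar a gv y)

/-- Partial derivative of a function on `ℝⁿ` in the `i`-th coordinate direction. -/
def pd {n : ℕ} (f : (Fin n → ℝ) → ℝ) (y : Fin n → ℝ) (i : Fin n) : ℝ :=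
  fderiv ℝ f y (Pi.single i 1)

/-- Second partial derivative. -/
def pd2 {n : ℕ} (f : (Fin n → ℝ) → ℝ) (y : Fin n → ℝ) (i j : Fin n) : ℝ :=
  pd (fun z => pd f z j) y i

/-- Partial derivative with respect to the first slot (`∂/∂s`). -/
def Ds (Ψ : ℝ → ℝ → ℝ) : ℝ → ℝ → ℝ := fun p q => deriv (fun u => Ψ u q) p

/-- Partial derivative with respect to the second slot (`∂/∂s̄`). -/
def Dt (Ψ : ℝ → ℝ → ℝ) : ℝ → ℝ → ℝ := fun p q => deriv (fun v => Ψ p v) q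

/-- `h_i = v_i − s·α_i`. -/
def hl {n : ℕ} (a : Matrix (Fin n) (Fin n) ℝ) (v y : Fin n → ℝ) (i : Fin n) : ℝ :=
  v i - sVar a v y * pd (alph a) y i

/-- Fundamental tensor `g_{ij} = ½ ∂²(F²)/∂yⁱ∂yʲ`. -/
def fundT {n : ℕ} (F : (Fin n → ℝ) → ℝ) (y : Fin n → ℝ) (i j : Fin n) : ℝ :=
  (1 / 2) * pd2 (fun z => F z ^ 2) y i j

/-- `Π = Ψ − sΨ_s − s̄Ψ_s̄`. -/
def PiF (Ψ : ℝ → ℝ → ℝ) (p q : ℝ) : ℝ := Ψ p q - p * Ds Ψ p q - q * Dt Ψ p q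

/-- `J = (Ψ_ss Ψ_s̄s̄ − Ψ_ss̄²)/Π`. -/
def JF (Ψ : ℝ → ℝ → ℝ) (p q : ℝ) : ℝ :=
  (Ds (Ds Ψ) p q * Dt (Dt Ψ) p q - Dt (Ds Ψ) p q ^ 2) / PiF Ψ p q

/-- `Γ`, with `B = b²`, `G = g²`, `Θ = θ` as real parameters. -/
def GammaF (Ψ : ℝ → ℝ → ℝ) (B G Θ p q : ℝ) : ℝ :=
  PiF Ψ p q + (B - p ^ 2) * Ds (Ds Ψ) p q + (G - q ^ 2) * Dt (Dt Ψ) p q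
    + 2 * (Θ - p * q) * Dt (Ds Ψ) p q
    + ((B - p ^ 2) * (G - q ^ 2) - (Θ - p * q) ^ 2) * JF Ψ p q

/-- `ρ = Ψ(Ψ − sΨ_s − s̄Ψ_s̄)`. -/
def rhoF (Ψ : ℝ → ℝ → ℝ) : ℝ → ℝ → ℝ := fun p q => Ψ p q * PiF Ψ p q

/-- `ρ₀ = ΨΨ_ss + Ψ_s²`. -/
def rho0F (Ψ : ℝ → ℝ → ℝ) : ℝ → ℝ → ℝ := fun p q => Ψ p q * Ds (Ds Ψ) p q + Ds Ψ p q ^ 2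

/-- `ρ̄₀ = ΨΨ_s̄s̄ + Ψ_s̄²`. -/
def rhobar0F (Ψ : ℝ → ℝ → ℝ) : ℝ → ℝ → ℝ := fun p q => Ψ p q * Dt (Dt Ψ) p q + Dt Ψ p q ^ 2

/-- `ρ₃ = ΨΨ_ss̄ + Ψ_sΨ_s̄`. -/
def rho3F (Ψ : ℝ → ℝ → ℝ) : ℝ → ℝ → ℝ :=
  fun p q => Ψ p q * Dt (Ds Ψ) p q + Ds Ψ p q * Dt Ψ p q

/-- `ρ₁ = ΨΨ_s − sρ₀ − s̄ρ₃`. -/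
def rho1F (Ψ : ℝ → ℝ → ℝ) : ℝ → ℝ → ℝ :=
  fun p q => Ψ p q * Ds Ψ p q - p * rho0F Ψ p q - q * rho3F Ψ p q

/-- `ρ̄₁ = ΨΨ_s̄ − s̄ρ̄₀ − sρ₃`. -/
def rhobar1F (Ψ : ℝ → ℝ → ℝ) : ℝ → ℝ → ℝ :=
  fun p q => Ψ p q * Dt Ψ p q - q * rhobar0F Ψ p q - p * rho3F Ψ p q

/-- `ρ₂ = −sρ₁ − s̄ρ̄₁`. -/
def rho2F (Ψ : ℝ → ℝ → ℝ) : ℝ → ℝ → ℝ :=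
  fun p q => -p * rho1F Ψ p q - q * rhobar1F Ψ p q

/-- `π₁ = Ψ_s̄Ψ_ss̄ − Ψ_sΨ_s̄s̄ + sΨJ`. -/
def pi1F (Ψ : ℝ → ℝ → ℝ) (p q : ℝ) : ℝ :=
  Dt Ψ p q * Dt (Ds Ψ) p q - Ds Ψ p q * Dt (Dt Ψ) p q + p * Ψ p q * JF Ψ p q

/-- `π₂ = Ψ_sΨ_ss̄ − Ψ_s̄Ψ_ss + s̄ΨJ`. -/
def pi2F (Ψ : ℝ → ℝ → ℝ) (p q : ℝ) : ℝ :=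
  Ds Ψ p q * Dt (Ds Ψ) p q - Dt Ψ p q * Ds (Ds Ψ) p q + q * Ψ p q * JF Ψ p q


/-- Christoffel symbols `Γ^k_{ij}` of the Riemannian metric `a_{ij}(x)`. -/
def chr {n : ℕ} (a : (Fin n → ℝ) → Matrix (Fin n) (Fin n) ℝ) (x : Fin n → ℝ)
    (k i j : Fin n) : ℝ :=
  (1 / 2) * ∑ l, (a x)⁻¹ k l *
    (pd (fun z => a z j l) x i + pd (fun z => a z i l) x j - pd (fun z => a z i j) x l)

/-- Geodesic coefficients `^αG^i = ½ Γ^i_{jk} y^j y^k` of `α`. -/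
def alphaG {n : ℕ} (a : (Fin n → ℝ) → Matrix (Fin n) (Fin n) ℝ) (x y : Fin n → ℝ)
    (i : Fin n) : ℝ :=
  (1 / 2) * ∑ j, ∑ k, chr a x i j k * y j * y k

/-- Covariant derivative `v_{i|j}` of a 1-form `v` with respect to `α`. -/
def covD {n : ℕ} (a : (Fin n → ℝ) → Matrix (Fin n) (Fin n) ℝ)
    (v : (Fin n → ℝ) → Fin n → ℝ) (x : Fin n → ℝ) (i j : Fin n) : ℝ :=
  pd (fun z => v z i) x j - ∑ k, v x k * chr a x k i j

/-- `r_{ij} = ½(v_{i|j} + v_{j|i})`. -/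
def rSym {n : ℕ} (a : (Fin n → ℝ) → Matrix (Fin n) (Fin n) ℝ)
    (v : (Fin n → ℝ) → Fin n → ℝ) (x : Fin n → ℝ) (i j : Fin n) : ℝ :=
  (1 / 2) * (covD a v x i j + covD a v x j i)

/-- `s_{ij} = ½(v_{i|j} − v_{j|i})`. -/
def sSym {n : ℕ} (a : (Fin n → ℝ) → Matrix (Fin n) (Fin n) ℝ)
    (v : (Fin n → ℝ) → Fin n → ℝ) (x : Fin n → ℝ) (i j : Fin n) : ℝ :=
  (1 / 2) * (covD a v x i j - covD a v x j i)

/-- `r_{00} = r_{ij} y^i y^j`. -/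
def r00 {n : ℕ} (a : (Fin n → ℝ) → Matrix (Fin n) (Fin n) ℝ)
    (v : (Fin n → ℝ) → Fin n → ℝ) (x y : Fin n → ℝ) : ℝ :=
  ∑ i, ∑ j, rSym a v x i j * y i * y j

/-- `s_{j0} = s_{jk} y^k`. -/
def s0low {n : ℕ} (a : (Fin n → ℝ) → Matrix (Fin n) (Fin n) ℝ)
    (v : (Fin n → ℝ) → Fin n → ℝ) (x y : Fin n → ℝ) (j : Fin n) : ℝ :=
  ∑ k, sSym a v x j k * y k

/-- `s^i_0 = a^{ij} s_{j0}`. -/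
def sUp0 {n : ℕ} (a : (Fin n → ℝ) → Matrix (Fin n) (Fin n) ℝ)
    (v : (Fin n → ℝ) → Fin n → ℝ) (x y : Fin n → ℝ) (i : Fin n) : ℝ :=
  ∑ j, (a x)⁻¹ i j * s0low a v x y j

/-- Contraction `w_i · (s of v)^i_0`. -/
def contrS {n : ℕ} (a : (Fin n → ℝ) → Matrix (Fin n) (Fin n) ℝ)
    (v w : (Fin n → ℝ) → Fin n → ℝ) (x y : Fin n → ℝ) : ℝ :=
  ∑ i, w x i * sUp0 a v x y i

/-- Fundamental tensor of `F(x,·)` as a matrix. -/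
def gmatF {n : ℕ} (F : (Fin n → ℝ) → (Fin n → ℝ) → ℝ) (x y : Fin n → ℝ) :
    Matrix (Fin n) (Fin n) ℝ :=
  Matrix.of fun i j => fundT (F x) y i j

/-- Spray coefficients `G^i = ¼ g^{il}(∂g_{jl}/∂x^k + ∂g_{lk}/∂x^j − ∂g_{jk}/∂x^l) y^j y^k`. -/
def sprayF {n : ℕ} (F : (Fin n → ℝ) → (Fin n → ℝ) → ℝ) (x y : Fin n → ℝ) (i : Fin n) : ℝ :=
  (1 / 4) * ∑ l, (gmatF F x y)⁻¹ i l *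
    ∑ j, ∑ k, (pd (fun z => gmatF F z y j l) x k
        + pd (fun z => gmatF F z y l k) x j
        - pd (fun z => gmatF F z y j k) x l) * y j * y k

lemma la_scalar {V Γv P Q T A C D w w' R R' J : ℝ} (hV : 0 < V) (hΓ : 0 < Γv)
    (hJ : J * V = P * T - Q ^ 2)
    (hΓd : Γv = V + A * P + D * T + 2 * C * Q + (A * D - C ^ 2) * J)
    (h1 : V * R = V * w + (P * A + Q * C) * w + (Q * A + T * C) * w')
    (h2 : V * R' = V * w' + (P * C + Q * D) * w + (Q * C + T * D) * w') :
    (P * w + Q * w') * (1 / (2 * V)) = 1 / (2 * Γv) * ((P + D * J) * R + (Q - C * J) * R') ∧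
    (Q * w + T * w') * (1 / (2 * V)) = 1 / (2 * Γv) * ((T + A * J) * R' + (Q - C * J) * R) := by
  constructor
  · rw [mul_one_div, one_div_mul_eq_div, div_eq_div_iff (by positivity) (by positivity)]
    linear_combination 2 * (P * w + Q * w') * hΓd - 2 * (P + D * J) * h1 - 2 * (Q - C * J) * h2
      - 2 * (D * w - C * w') * hJ
  · rw [mul_one_div, one_div_mul_eq_div, div_eq_div_iff (by positivity) (by positivity)]
    linear_combination 2 * (Q * w + T * w') * hΓd - 2 * (T + A * J) * h2 - 2 * (Q - C * J) * h1
      - 2 * (A * w' - C * w) * hJ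

lemma la_scalar_conv {V Γv P Q T A C D w w' R R' J : ℝ} (hV : 0 < V) (hΓ : 0 < Γv)
    (hJ : J * V = P * T - Q ^ 2)
    (hΓd : Γv = V + A * P + D * T + 2 * C * Q + (A * D - C ^ 2) * J)
    (h1 : Γv * w = Γv * R - (((P + D * J) * R + (Q - C * J) * R') * A
      + ((T + A * J) * R' + (Q - C * J) * R) * C))
    (h2 : Γv * w' = Γv * R' - (((P + D * J) * R + (Q - C * J) * R') * C
      + ((T + A * J) * R' + (Q - C * J) * R) * D)) :
    V * R = V * w + (P * A + Q * C) * w + (Q * A + T * C) * w' ∧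
    V * R' = V * w' + (P * C + Q * D) * w + (Q * C + T * D) * w' := by
  have hJ' : J = (P * T - Q ^ 2) / V := by rw [← hJ]; field_simp
  constructor
  · apply mul_left_cancel₀ hΓ.ne'
    have : Γv * (V * w + (P * A + Q * C) * w + (Q * A + T * C) * w') =
      (V + P * A + Q * C) * (Γv * w) + (Q * A + T * C) * (Γv * w') := by ring
    rw [this, h1, h2, hΓd, hJ']
    field_simp
    ring
  · apply mul_left_cancel₀ hΓ.ne'
    have : Γv * (V * w' + (P * C + Q * D) * w + (Q * C + T * D) * w') =
      (P * C + Q * D) * (Γv * w) + (V + Q * C + T * D) * (Γv * w') := by ring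
    rw [this, h1, h2, hΓd, hJ']
    field_simp
    ring

/-- The linear-algebra core: equivalence of the two systems of equations at a point. -/
lemma la_core {n : ℕ} (Lb Lg : (Fin n → ℝ) →ₗ[ℝ] ℝ) (X S h k : Fin n → ℝ)
    {V Γv P Q T A C D r r' J R R' : ℝ} (hV : 0 < V) (hΓ : 0 < Γv)
    (hJ : J = (P * T - Q ^ 2) / V)
    (hΓd : Γv = V + A * P + D * T + 2 * C * Q + (A * D - C ^ 2) * J)
    (hbh : Lb h = A) (hbk : Lb k = C) (hgh : Lg h = C) (hgk : Lg k = D)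
    (hR : R = r - 2 * Lb S) (hR' : R' = r' - 2 * Lg S) :
    (∀ j, X j + S j + (1 / (2 * V)) * ((P * h j + Q * k j) * (r + 2 * Lb X)
        + (Q * h j + T * k j) * (r' + 2 * Lg X)) = 0) ↔
    (∀ j, X j + S j + (1 / (2 * Γv)) * (((P + D * J) * R + (Q - C * J) * R') * h j
        + ((T + A * J) * R' + (Q - C * J) * R) * k j) = 0) := by
  have hJ' : J * V = P * T - Q ^ 2 := by rw [hJ]; field_simp
  have key : ∀ c d : ℝ, (∀ j, X j + S j + (c * h j + d * k j) = 0) →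
      Lb X + Lb S + (c * A + d * C) = 0 ∧ Lg X + Lg S + (c * C + d * D) = 0 := by
    intro c d hcd
    have : X + S + (c • h + d • k) = 0 := by
      funext j; simpa using hcd j
    constructor
    · have := congrArg Lb this
      simpa [hbh, hbk] using this
    · have := congrArg Lg this
      simpa [hgh, hgk] using this
  constructor
  · intro hE
    obtain ⟨h1, h2⟩ := key ((P * (r + 2 * Lb X) + Q * (r' + 2 * Lg X)) * (1 / (2 * V)))
      ((Q * (r + 2 * Lb X) + T * (r' + 2 * Lg X)) * (1 / (2 * V)))
      (fun j => by rw [← hE j]; ring)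
    have e1 : V * R = V * (r + 2 * Lb X) + (P * A + Q * C) * (r + 2 * Lb X)
        + (Q * A + T * C) * (r' + 2 * Lg X) := by
      rw [hR]; field_simp at h1; linear_combination -h1
    have e2 : V * R' = V * (r' + 2 * Lg X) + (P * C + Q * D) * (r + 2 * Lb X)
        + (Q * C + T * D) * (r' + 2 * Lg X) := by
      rw [hR']; field_simp at h2; linear_combination -h2
    obtain ⟨f1, f2⟩ := la_scalar hV hΓ hJ' hΓd e1 e2
    intro j
    rw [← hE j]
    linear_combination -h j * f1 - k j * f2
  · intro hE
    obtain ⟨h1, h2⟩ := key (1 / (2 * Γv) * ((P + D * J) * R + (Q - C * J) * R'))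
      (1 / (2 * Γv) * ((T + A * J) * R' + (Q - C * J) * R))
      (fun j => by rw [← hE j]; ring)
    obtain ⟨e1, e2⟩ := la_scalar_conv (w := r + 2 * Lb X) (w' := r' + 2 * Lg X) (R := R) (R' := R')
      hV hΓ hJ' hΓd
      (by
        have : 2 * Γv * (1 / (2 * Γv)) = 1 := by field_simp
        linear_combination (2 * Γv) * h1 - Γv * hR - (((P + D * J) * R + (Q - C * J) * R') * A
          + ((T + A * J) * R' + (Q - C * J) * R) * C) * this)
      (by
        have : 2 * Γv * (1 / (2 * Γv)) = 1 := by field_simp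
        linear_combination (2 * Γv) * h2 - Γv * hR' - (((P + D * J) * R + (Q - C * J) * R') * C
          + ((T + A * J) * R' + (Q - C * J) * R) * D) * this)
    obtain ⟨f1, f2⟩ := la_scalar hV hΓ hJ' hΓd e1 e2
    intro j
    rw [← hE j]
    linear_combination h j * f1 + k j * f2

lemma Psi_hasFDerivAt {Φ : ℝ → ℝ → ℝ} {p q : ℝ}
    (h : DifferentiableAt ℝ (fun r : ℝ × ℝ => Φ r.1 r.2) (p, q)) :
    HasFDerivAt (fun r : ℝ × ℝ => Φ r.1 r.2)
      (Ds Φ p q • ContinuousLinearMap.fst ℝ ℝ ℝ + Dt Φ p q • ContinuousLinearMap.snd ℝ ℝ ℝ)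
      (p, q) := by
  have h0 := h.hasFDerivAt
  set L := fderiv ℝ (fun r : ℝ × ℝ => Φ r.1 r.2) (p, q)
  have h1 : Ds Φ p q = L (1, 0) := by
    have : HasDerivAt (fun u : ℝ => (u, q)) ((1 : ℝ), (0 : ℝ)) p :=
      (hasDerivAt_id p).prodMk (hasDerivAt_const p q)
    exact (HasFDerivAt.comp_hasDerivAt (x := p) (f := fun u : ℝ => (u, q)) h0 this).deriv
  have h2 : Dt Φ p q = L (0, 1) := by
    have : HasDerivAt (fun u : ℝ => (p, u)) ((0 : ℝ), (1 : ℝ)) q :=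
      (hasDerivAt_const q p).prodMk (hasDerivAt_id q)
    exact (HasFDerivAt.comp_hasDerivAt (x := q) (f := fun u : ℝ => (p, u)) h0 this).deriv
  convert h0 using 1
  ext <;> simp [h1, h2]

lemma Ds_eq {Φ : ℝ → ℝ → ℝ} {p q : ℝ}
    (h : DifferentiableAt ℝ (fun r : ℝ × ℝ => Φ r.1 r.2) (p, q)) :
    Ds Φ p q = fderiv ℝ (fun r : ℝ × ℝ => Φ r.1 r.2) (p, q) (1, 0) := by
  rw [(Psi_hasFDerivAt h).fderiv]; simp

lemma Dt_eq {Φ : ℝ → ℝ → ℝ} {p q : ℝ}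
    (h : DifferentiableAt ℝ (fun r : ℝ × ℝ => Φ r.1 r.2) (p, q)) :
    Dt Φ p q = fderiv ℝ (fun r : ℝ × ℝ => Φ r.1 r.2) (p, q) (0, 1) := by
  rw [(Psi_hasFDerivAt h).fderiv]; simp

lemma smooth_facts {Ψ : ℝ → ℝ → ℝ} {W : Set (ℝ × ℝ)} (hW : IsOpen W)
    (hΨ : ContDiffOn ℝ (⊤ : ℕ∞) (fun p : ℝ × ℝ => Ψ p.1 p.2) W) {p q : ℝ} (hpq : (p, q) ∈ W) :
    DifferentiableAt ℝ (fun r : ℝ × ℝ => Ψ r.1 r.2) (p, q) ∧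
    DifferentiableAt ℝ (fun r : ℝ × ℝ => Ds Ψ r.1 r.2) (p, q) ∧
    DifferentiableAt ℝ (fun r : ℝ × ℝ => Dt Ψ r.1 r.2) (p, q) ∧
    Ds (Dt Ψ) p q = Dt (Ds Ψ) p q := by
  have hc : ∀ r ∈ W, ContDiffAt ℝ (⊤ : ℕ∞) (fun p : ℝ × ℝ => Ψ p.1 p.2) r :=
    fun r hr => (hΨ r hr).contDiffAt (hW.mem_nhds hr)
  have hd : ∀ r ∈ W, DifferentiableAt ℝ (fun p : ℝ × ℝ => Ψ p.1 p.2) r :=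
    fun r hr => (hc r hr).differentiableAt (by simp)
  have hf : DifferentiableAt ℝ (fderiv ℝ (fun p : ℝ × ℝ => Ψ p.1 p.2)) (p, q) :=
    ((hc _ hpq).fderiv_right (m := 1) (by norm_cast)).differentiableAt (by simp)
  have e1 : (fun r : ℝ × ℝ => Ds Ψ r.1 r.2) =ᶠ[nhds (p, q)]
      fun r => fderiv ℝ (fun p : ℝ × ℝ => Ψ p.1 p.2) r (1, 0) := by
    filter_upwards [hW.mem_nhds hpq] with r hr
    exact Ds_eq (hd r hr)
  have e2 : (fun r : ℝ × ℝ => Dt Ψ r.1 r.2) =ᶠ[nhds (p, q)]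
      fun r => fderiv ℝ (fun p : ℝ × ℝ => Ψ p.1 p.2) r (0, 1) := by
    filter_upwards [hW.mem_nhds hpq] with r hr
    exact Dt_eq (hd r hr)
  have d1 : DifferentiableAt ℝ (fun r : ℝ × ℝ => Ds Ψ r.1 r.2) (p, q) :=
    (hf.clm_apply (differentiableAt_const _)).congr_of_eventuallyEq e1
  have d2 : DifferentiableAt ℝ (fun r : ℝ × ℝ => Dt Ψ r.1 r.2) (p, q) :=
    (hf.clm_apply (differentiableAt_const _)).congr_of_eventuallyEq e2
  refine ⟨hd _ hpq, d1, d2, ?_⟩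
  rw [Ds_eq d2, Dt_eq d1, e1.fderiv_eq, e2.fderiv_eq]
  rw [fderiv_clm_apply hf (differentiableAt_const _), fderiv_clm_apply hf (differentiableAt_const _)]
  simp
  have := (hc _ hpq).isSymmSndFDerivAt (by simp; exact WithTop.coe_le_coe.2 (le_top (a := (2 : ℕ∞))))
  exact this _ _

lemma div_hasFDerivAt_aux {E : Type*} [NormedAddCommGroup E] [NormedSpace ℝ E]
    {A B : E → ℝ} {A' B' : E →L[ℝ] ℝ} {z : E}
    (hA : HasFDerivAt A A' z) (hB : HasFDerivAt B B' z) (h0 : A z ≠ 0) :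
    HasFDerivAt (fun w => B w / A w) ((1 / A z) • (B' - (B z / A z) • A')) z := by
  have hi := (hasDerivAt_inv h0).comp_hasFDerivAt z hA
  refine (HasFDerivAt.congr_fderiv (hB.mul hi) ?_)
  ext v; simp; field_simp; ring

lemma comp_hasFDerivAt {E : Type*} [NormedAddCommGroup E] [NormedSpace ℝ E]
    {Φ : ℝ → ℝ → ℝ} {A B C : E → ℝ} {A' B' C' : E →L[ℝ] ℝ} {z : E}
    (hA : HasFDerivAt A A' z) (hB : HasFDerivAt B B' z) (hC : HasFDerivAt C C' z)
    (h0 : A z ≠ 0)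
    (h : DifferentiableAt ℝ (fun r : ℝ × ℝ => Φ r.1 r.2) (B z / A z, C z / A z)) :
    HasFDerivAt (fun w => Φ (B w / A w) (C w / A w))
      ((Ds Φ (B z / A z) (C z / A z) / A z) • (B' - (B z / A z) • A')
        + (Dt Φ (B z / A z) (C z / A z) / A z) • (C' - (C z / A z) • A')) z := by
  have hs := div_hasFDerivAt_aux hA hB h0
  have ht := div_hasFDerivAt_aux hA hC h0
  have hcmp := HasFDerivAt.comp (g := fun r : ℝ × ℝ => Φ r.1 r.2) z
    (Psi_hasFDerivAt h) (hs.prodMk ht)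
  refine HasFDerivAt.congr_fderiv (f := fun w => Φ (B w / A w) (C w / A w)) hcmp ?_
  ext v; simp; ring

lemma F_hasFDerivAt {E : Type*} [NormedAddCommGroup E] [NormedSpace ℝ E]
    {Ψ : ℝ → ℝ → ℝ} {A B C : E → ℝ} {A' B' C' : E →L[ℝ] ℝ} {z : E}
    (hA : HasFDerivAt A A' z) (hB : HasFDerivAt B B' z) (hC : HasFDerivAt C C' z)
    (h0 : A z ≠ 0)
    (h : DifferentiableAt ℝ (fun r : ℝ × ℝ => Ψ r.1 r.2) (B z / A z, C z / A z)) :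
    HasFDerivAt (fun w => A w * Ψ (B w / A w) (C w / A w))
      (PiF Ψ (B z / A z) (C z / A z) • A' + Ds Ψ (B z / A z) (C z / A z) • B'
        + Dt Ψ (B z / A z) (C z / A z) • C') z := by
  refine HasFDerivAt.congr_fderiv (hA.mul (comp_hasFDerivAt hA hB hC h0 h)) ?_
  ext v; simp [PiF]; field_simp; ring

lemma quad_eq {n : ℕ} (a : Matrix (Fin n) (Fin n) ℝ) (y : Fin n → ℝ) :
    ∑ i, ∑ j, a i j * y i * y j = dotProduct y (Matrix.mulVec a y) := by
  simp only [dotProduct, Matrix.mulVec, Finset.mul_sum]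
  refine Finset.sum_congr rfl fun i _ => Finset.sum_congr rfl fun j _ => by ring

lemma quadInv_eq {n : ℕ} (a : Matrix (Fin n) (Fin n) ℝ) (u v : Fin n → ℝ) :
    quadInv a u v = dotProduct u (Matrix.mulVec a⁻¹ v) := by
  simp only [quadInv, dotProduct, Matrix.mulVec, Finset.mul_sum]
  refine Finset.sum_congr rfl fun i _ => Finset.sum_congr rfl fun j _ => by ring

lemma quad_pos {n : ℕ} {a : Matrix (Fin n) (Fin n) ℝ} (ha : a.PosDef) {y : Fin n → ℝ}
    (hy : y ≠ 0) : 0 < ∑ i, ∑ j, a i j * y i * y j := by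
  rw [quad_eq]
  simpa using ha.dotProduct_mulVec_pos hy

lemma alph_pos {n : ℕ} {a : Matrix (Fin n) (Fin n) ℝ} (ha : a.PosDef) {y : Fin n → ℝ}
    (hy : y ≠ 0) : 0 < alph a y := Real.sqrt_pos.2 (quad_pos ha hy)

lemma alph_sq {n : ℕ} {a : Matrix (Fin n) (Fin n) ℝ} (ha : a.PosDef) {y : Fin n → ℝ}
    (hy : y ≠ 0) : alph a y ^ 2 = ∑ i, ∑ j, a i j * y i * y j :=
  Real.sq_sqrt (quad_pos ha hy).le

lemma posDef_symm {n : ℕ} {a : Matrix (Fin n) (Fin n) ℝ} (ha : a.PosDef) (i j : Fin n) :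
    a i j = a j i := by
  have := ha.isHermitian.apply i j
  simpa using this.symm

lemma mulVec_inv_cancel {n : ℕ} {a : Matrix (Fin n) (Fin n) ℝ} (ha : a.PosDef)
    (m : Fin n → ℝ) : Matrix.mulVec a (Matrix.mulVec a⁻¹ m) = m := by
  rw [Matrix.mulVec_mulVec, Matrix.mul_nonsing_inv _ ((Matrix.isUnit_iff_isUnit_det a).1 ha.isUnit),
    Matrix.one_mulVec]

lemma inv_mulVec_cancel {n : ℕ} {a : Matrix (Fin n) (Fin n) ℝ} (ha : a.PosDef)
    (m : Fin n → ℝ) : Matrix.mulVec a⁻¹ (Matrix.mulVec a m) = m := by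
  rw [Matrix.mulVec_mulVec, Matrix.nonsing_inv_mul _ ((Matrix.isUnit_iff_isUnit_det a).1 ha.isUnit),
    Matrix.one_mulVec]

lemma dot_mulVec_symm {n : ℕ} {a : Matrix (Fin n) (Fin n) ℝ} (ha : a.PosDef)
    (u v : Fin n → ℝ) : dotProduct u (Matrix.mulVec a v) = dotProduct v (Matrix.mulVec a u) := by
  simp only [dotProduct, Matrix.mulVec, Finset.mul_sum]
  rw [Finset.sum_comm]
  refine Finset.sum_congr rfl fun i _ => Finset.sum_congr rfl fun j _ => ?_
  rw [posDef_symm ha i j]; ring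

lemma cauchy {n : ℕ} {a : Matrix (Fin n) (Fin n) ℝ} (ha : a.PosDef) {y : Fin n → ℝ}
    (hy : y ≠ 0) (v : Fin n → ℝ) :
    oneForm v y ^ 2 ≤ quadInv a v v * ∑ i, ∑ j, a i j * y i * y j := by
  have hQ := quad_pos ha hy
  rw [quadInv_eq]
  rw [quad_eq] at *
  set w := Matrix.mulVec a⁻¹ v with hw
  have haw : Matrix.mulVec a w = v := mulVec_inv_cancel ha v
  set Q := dotProduct y (Matrix.mulVec a y)
  have h1 : oneForm v y = dotProduct y v := by
    rw [dotProduct_comm]; rfl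
  set c := oneForm v y
  have h2 : dotProduct w (Matrix.mulVec a y) = c := by
    rw [dot_mulVec_symm ha, haw, h1]
  have h0 := ha.posSemidef.dotProduct_mulVec_nonneg (Q • w - c • y)
  simp only [star_trivial, Matrix.mulVec_sub, Matrix.mulVec_smul, haw, dotProduct_sub,
    sub_dotProduct, smul_dotProduct, dotProduct_smul, smul_eq_mul, h2, ← h1] at h0
  rw [dotProduct_comm w v] at h0
  have h3 : 0 ≤ Q * (dotProduct v w * Q - c ^ 2) := by
    have : dotProduct y (Matrix.mulVec a y) = Q := rfl
    rw [this] at h0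
    linarith
  have := nonneg_of_mul_nonneg_right h3 hQ
  linarith

lemma sVar_mem {n : ℕ} {a : Matrix (Fin n) (Fin n) ℝ} (ha : a.PosDef) {y : Fin n → ℝ}
    (hy : y ≠ 0) {v : Fin n → ℝ} {c : ℝ} (hc : 0 < c) (h : Real.sqrt (quadInv a v v) < c) :
    sVar a v y ∈ Set.Ioo (-c) c := by
  have h1 := cauchy ha hy v
  have hQ := quad_pos ha hy
  have hα := alph_pos ha hy
  rw [← alph_sq ha hy] at h1
  rw [Real.sqrt_lt' hc] at h
  have h2 : sVar a v y ^ 2 < c ^ 2 := by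
    rw [sVar, div_pow, div_lt_iff₀ (by positivity)]
    exact h1.trans_lt (mul_lt_mul_of_pos_right h (by positivity))
  exact abs_lt.1 (abs_lt_of_sq_lt_sq h2 hc.le)

lemma alph_hasFDerivAt_y {n : ℕ} {a : Matrix (Fin n) (Fin n) ℝ} (ha : a.PosDef) {y : Fin n → ℝ}
    (hy : y ≠ 0) : HasFDerivAt (alph a)
      (∑ j, ((∑ i, a i j * y i) / alph a y) • ContinuousLinearMap.proj (R := ℝ) (φ := fun _ : Fin n => ℝ) j) y := by
  have h1 : ∀ i j : Fin n, HasFDerivAt (fun z : Fin n → ℝ => a i j * z i * z j)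
      ((a i j * y i) • ContinuousLinearMap.proj (R := ℝ) (φ := fun _ : Fin n => ℝ) j
        + (a i j * y j) • ContinuousLinearMap.proj (R := ℝ) (φ := fun _ : Fin n => ℝ) i) y := by
    intro i j
    refine HasFDerivAt.congr_fderiv
      (((hasFDerivAt_apply (𝕜 := ℝ) i y).const_mul (a i j)).mul (hasFDerivAt_apply (𝕜 := ℝ) j y)) ?_
    ext v; simp; ring
  have h2 := HasFDerivAt.fun_sum (u := Finset.univ) fun i _ =>
    HasFDerivAt.fun_sum (u := Finset.univ) fun j _ => h1 i j
  refine HasFDerivAt.congr_fderiv (h2.sqrt (quad_pos ha hy).ne') ?_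
  ext v
  have hα := alph_pos ha hy
  simp only [Finset.sum_add_distrib]
  have e : ∑ i, ∑ j, a i j * y j * v i = ∑ i, ∑ j, a i j * y i * v j := by
    rw [Finset.sum_comm]
    refine Finset.sum_congr rfl fun i _ => Finset.sum_congr rfl fun j _ => ?_
    rw [posDef_symm ha i j]
  simp only [smul_apply, add_apply,
    sum_apply, ContinuousLinearMap.proj_apply, smul_eq_mul, e]
  change 1 / (2 * alph a y) * _ = _
  have e2 : ∑ i, ∑ j, a i j * y i * v j = ∑ j, ∑ i, a i j * y i * v j := Finset.sum_comm
  rw [e2]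
  simp only [Finset.sum_div, Finset.sum_mul, Finset.mul_sum, ← Finset.sum_add_distrib]
  refine Finset.sum_congr rfl fun i _ => Finset.sum_congr rfl fun j _ => ?_
  field_simp; ring

lemma pd_alph {n : ℕ} {a : Matrix (Fin n) (Fin n) ℝ} (ha : a.PosDef) {y : Fin n → ℝ}
    (hy : y ≠ 0) (j : Fin n) : pd (alph a) y j = (∑ i, a i j * y i) / alph a y := by
  rw [pd, (alph_hasFDerivAt_y ha hy).fderiv]
  simp [Pi.single_apply]

lemma oneForm_hasFDerivAt_y {n : ℕ} (v y : Fin n → ℝ) : HasFDerivAt (oneForm v)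
      (∑ j, v j • ContinuousLinearMap.proj (R := ℝ) (φ := fun _ : Fin n => ℝ) j) y :=
  HasFDerivAt.fun_sum (u := Finset.univ) fun i _ =>
    (hasFDerivAt_apply (𝕜 := ℝ) i y).const_mul (v i)

lemma pd_Fm {n : ℕ} {a : Matrix (Fin n) (Fin n) ℝ} (ha : a.PosDef) {y : Fin n → ℝ}
    (hy : y ≠ 0) (bv gv : Fin n → ℝ) {Ψ : ℝ → ℝ → ℝ}
    (h : DifferentiableAt ℝ (fun r : ℝ × ℝ => Ψ r.1 r.2) (sVar a bv y, sVar a gv y)) (j : Fin n) :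
    pd (Fm a bv gv Ψ) y j = PiF Ψ (sVar a bv y) (sVar a gv y) * ((∑ i, a i j * y i) / alph a y)
      + Ds Ψ (sVar a bv y) (sVar a gv y) * bv j + Dt Ψ (sVar a bv y) (sVar a gv y) * gv j := by
  have := F_hasFDerivAt (alph_hasFDerivAt_y ha hy) (oneForm_hasFDerivAt_y bv y)
    (oneForm_hasFDerivAt_y gv y) (alph_pos ha hy).ne' h
  have h2 : fderiv ℝ (Fm a bv gv Ψ) y = _ := this.fderiv
  rw [pd, h2]
  simp [Pi.single_apply, sVar]

lemma sum_pd {n : ℕ} (f : (Fin n → ℝ) → ℝ) (x y : Fin n → ℝ) :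
    ∑ k, pd f x k * y k = fderiv ℝ f x y := by
  conv_rhs => rw [pi_eq_sum_univ' y, map_sum]
  refine Finset.sum_congr rfl fun k _ => ?_
  rw [map_smul, smul_eq_mul, mul_comm, pd]

lemma alph_hasFDerivAt_x {n : ℕ} {a : (Fin n → ℝ) → Matrix (Fin n) (Fin n) ℝ} {x : Fin n → ℝ}
    (hd : ∀ i j, DifferentiableAt ℝ (fun z => a z i j) x)
    (ha : (a x).PosDef) {y : Fin n → ℝ} (hy : y ≠ 0) :
    HasFDerivAt (fun z => alph (a z) y)
      ((1 / (2 * alph (a x) y)) • ∑ i, ∑ j, (y i * y j) • fderiv ℝ (fun z => a z i j) x) x := by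
  have h2 := HasFDerivAt.fun_sum (u := Finset.univ) fun i _ =>
    HasFDerivAt.fun_sum (u := Finset.univ) fun j _ =>
      (((hd i j).hasFDerivAt.mul_const (y i)).mul_const (y j))
  refine HasFDerivAt.congr_fderiv (h2.sqrt (quad_pos ha hy).ne') ?_
  change (1 / (2 * alph (a x) y)) • _ = _
  congr 1
  refine Finset.sum_congr rfl fun i _ => Finset.sum_congr rfl fun j _ => ?_
  rw [smul_smul, mul_comm]

lemma oneForm_hasFDerivAt_x {n : ℕ} {v : (Fin n → ℝ) → Fin n → ℝ} {x : Fin n → ℝ}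
    (hd : ∀ i, DifferentiableAt ℝ (fun z => v z i) x) (y : Fin n → ℝ) :
    HasFDerivAt (fun z => oneForm (v z) y) (∑ i, y i • fderiv ℝ (fun z => v z i) x) x :=
  HasFDerivAt.fun_sum (u := Finset.univ) fun i _ => (hd i).hasFDerivAt.mul_const (y i)

section Christoffel

variable {n : ℕ} {a : (Fin n → ℝ) → Matrix (Fin n) (Fin n) ℝ} {x : Fin n → ℝ}

/-- lowered geodesic coefficients, times four -/
def mlow {n : ℕ} (a : (Fin n → ℝ) → Matrix (Fin n) (Fin n) ℝ) (x y : Fin n → ℝ) (l : Fin n) : ℝ :=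
  ∑ j, ∑ k, (2 * pd (fun z => a z j l) x k - pd (fun z => a z j k) x l) * y j * y k

lemma chr_symm (hs : ∀ i j k, pd (fun z => a z i j) x k = pd (fun z => a z j i) x k)
    (k i j : Fin n) : chr a x k i j = chr a x k j i := by
  simp only [chr]
  congr 1
  refine Finset.sum_congr rfl fun l _ => ?_
  rw [hs i j l]; ring

lemma alphaG_eq (y : Fin n → ℝ) :
    alphaG a x y = (1 / 4 : ℝ) • Matrix.mulVec (a x)⁻¹ (mlow a x y) := by
  funext i
  have h1 : ∀ l, ∑ j, ∑ k, (pd (fun z => a z k l) x j + pd (fun z => a z j l) x k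
      - pd (fun z => a z j k) x l) * y j * y k = mlow a x y l := by
    intro l
    have e : ∑ j, ∑ k, pd (fun z => a z k l) x j * y j * y k
        = ∑ j, ∑ k, pd (fun z => a z j l) x k * y j * y k := by
      rw [Finset.sum_comm]
      refine Finset.sum_congr rfl fun j _ => Finset.sum_congr rfl fun k _ => by ring
    simp only [mlow, add_mul, sub_mul, Finset.sum_add_distrib, Finset.sum_sub_distrib, e]
    rw [← Finset.sum_add_distrib]
    congr 1
    refine Finset.sum_congr rfl fun j _ => ?_
    rw [← Finset.sum_add_distrib]
    refine Finset.sum_congr rfl fun k _ => by ring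
  simp only [alphaG, chr, Pi.smul_apply, smul_eq_mul, Matrix.mulVec, dotProduct, ← h1]
  simp only [Finset.mul_sum, Finset.sum_mul]
  have e3 : ∀ f : Fin n → Fin n → Fin n → ℝ, ∑ j, ∑ k, ∑ l, f j k l = ∑ l, ∑ j, ∑ k, f j k l := by
    intro f
    rw [Finset.sum_comm (s := Finset.univ) (t := Finset.univ) (f := fun l j => ∑ k, f j k l)]
    exact Finset.sum_congr rfl fun j _ => Finset.sum_comm
  rw [e3]
  refine Finset.sum_congr rfl fun l _ => Finset.sum_congr rfl fun j _ =>
    Finset.sum_congr rfl fun k _ => by ring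

lemma lower_G (ha : (a x).PosDef) (y : Fin n → ℝ) (j : Fin n) :
    ∑ i, a x i j * alphaG a x y i = (1 / 4) * mlow a x y j := by
  have h : Matrix.mulVec (a x) (alphaG a x y) = (1 / 4 : ℝ) • mlow a x y := by
    rw [alphaG_eq, Matrix.mulVec_smul, mulVec_inv_cancel ha]
  have := congrFun h j
  simp only [Pi.smul_apply, smul_eq_mul] at this
  rw [← this]
  exact Finset.sum_congr rfl fun i _ => by rw [posDef_symm ha i j]

lemma r00_eq (v : (Fin n → ℝ) → Fin n → ℝ) (y : Fin n → ℝ) :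
    r00 a v x y = ∑ i, (∑ j, pd (fun z => v z i) x j * y j) * y i
      - 2 * ∑ k, v x k * alphaG a x y k := by
  have e1 : r00 a v x y = ∑ i, ∑ j, covD a v x i j * y i * y j := by
    have e : ∑ i, ∑ j, covD a v x j i * y i * y j = ∑ i, ∑ j, covD a v x i j * y i * y j := by
      rw [Finset.sum_comm]
      refine Finset.sum_congr rfl fun j _ => Finset.sum_congr rfl fun k _ => by ring
    have : r00 a v x y = (1 / 2) * (∑ i, ∑ j, covD a v x i j * y i * y j
        + ∑ i, ∑ j, covD a v x j i * y i * y j) := by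
      simp only [r00, rSym, Finset.mul_sum, ← Finset.sum_add_distrib]
      refine Finset.sum_congr rfl fun j _ => Finset.sum_congr rfl fun k _ => by ring
    rw [this, e]; ring
  rw [e1]
  simp only [covD, sub_mul, Finset.sum_sub_distrib]
  congr 1
  · refine Finset.sum_congr rfl fun i _ => ?_
    rw [Finset.sum_mul]
    refine Finset.sum_congr rfl fun j _ => by ring
  · simp only [alphaG, Finset.mul_sum, Finset.sum_mul]
    conv_lhs => enter [2, i]; rw [Finset.sum_comm]
    rw [Finset.sum_comm]
    refine Finset.sum_congr rfl fun k _ => Finset.sum_congr rfl fun i _ =>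
      Finset.sum_congr rfl fun j _ => by ring

lemma s0low_eq (hs : ∀ i j k, pd (fun z => a z i j) x k = pd (fun z => a z j i) x k)
    (v : (Fin n → ℝ) → Fin n → ℝ) (y : Fin n → ℝ) (j : Fin n) :
    2 * s0low a v x y j = ∑ k, pd (fun z => v z j) x k * y k
      - ∑ k, y k * pd (fun z => v z k) x j := by
  simp only [s0low, sSym, covD, Finset.mul_sum, ← Finset.sum_sub_distrib]
  refine Finset.sum_congr rfl fun k _ => ?_
  have : ∑ l, v x l * chr a x l j k = ∑ l, v x l * chr a x l k j :=
    Finset.sum_congr rfl fun l _ => by rw [chr_symm hs]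
  rw [this]; ring

end Christoffel

lemma N_hasFDerivAt {E : Type*} [NormedAddCommGroup E] [NormedSpace ℝ E]
    {Ψ : ℝ → ℝ → ℝ} {A B C Y b g : E → ℝ} {A' B' C' Y' b' g' : E →L[ℝ] ℝ} {z : E}
    (hA : HasFDerivAt A A' z) (hB : HasFDerivAt B B' z) (hC : HasFDerivAt C C' z)
    (hY : HasFDerivAt Y Y' z) (hb : HasFDerivAt b b' z) (hg : HasFDerivAt g g' z)
    (h0 : A z ≠ 0) {p q : ℝ} (hp : B z / A z = p) (hq : C z / A z = q)
    (h : DifferentiableAt ℝ (fun r : ℝ × ℝ => Ψ r.1 r.2) (p, q))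
    (h1 : DifferentiableAt ℝ (fun r : ℝ × ℝ => Ds Ψ r.1 r.2) (p, q))
    (h2 : DifferentiableAt ℝ (fun r : ℝ × ℝ => Dt Ψ r.1 r.2) (p, q))
    (hst : Ds (Dt Ψ) p q = Dt (Ds Ψ) p q) (v : E) :
    fderiv ℝ (fun w => PiF Ψ (B w / A w) (C w / A w) * (Y w / A w)
        + Ds Ψ (B w / A w) (C w / A w) * b w + Dt Ψ (B w / A w) (C w / A w) * g w) z v =
      PiF Ψ p q * ((Y' v - Y z / A z * A' v) / A z) + Ds Ψ p q * b' v + Dt Ψ p q * g' v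
      + (b z - p * (Y z / A z)) *
        ((Ds (Ds Ψ) p q * (B' v - p * A' v) + Dt (Ds Ψ) p q * (C' v - q * A' v)) / A z)
      + (g z - q * (Y z / A z)) *
        ((Dt (Ds Ψ) p q * (B' v - p * A' v) + Dt (Dt Ψ) p q * (C' v - q * A' v)) / A z) := by
  subst hp hq
  have hs := div_hasFDerivAt_aux hA hB h0
  have ht := div_hasFDerivAt_aux hA hC h0
  have hYA := div_hasFDerivAt_aux hA hY h0
  have c0 := comp_hasFDerivAt hA hB hC h0 h
  have c1 := comp_hasFDerivAt (Φ := Ds Ψ) hA hB hC h0 h1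
  have c2 := comp_hasFDerivAt (Φ := Dt Ψ) hA hB hC h0 h2
  have hPi := (c0.sub (hs.mul c1)).sub (ht.mul c2)
  have hN := ((hPi.mul hYA).add (c1.mul hb)).add (c2.mul hg)
  have e := hN.fderiv
  refine (congrArg (fun L : E →L[ℝ] ℝ => L v) e).trans ?_
  simp [PiF, hst]
  field_simp
  ring

/-- The pairing with a fixed covector as a linear map. -/
def quadLin {n : ℕ} (a : Matrix (Fin n) (Fin n) ℝ) (u : Fin n → ℝ) : (Fin n → ℝ) →ₗ[ℝ] ℝ where
  toFun v := quadInv a u v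
  map_add' v w := by simp only [quadInv_eq, Matrix.mulVec_add, dotProduct_add]
  map_smul' c v := by
    simp only [quadInv_eq, Matrix.mulVec_smul, dotProduct_smul, RingHom.id_apply]

lemma quadLin_apply {n : ℕ} (a : Matrix (Fin n) (Fin n) ℝ) (u v : Fin n → ℝ) :
    quadLin a u v = quadInv a u v := rfl

lemma quadLin_lower {n : ℕ} {a : Matrix (Fin n) (Fin n) ℝ} (ha : a.PosDef) (u w : Fin n → ℝ) :
    quadLin a u (fun j => ∑ i, a i j * w i) = ∑ i, u i * w i := by
  have : (fun j => ∑ i, a i j * w i) = Matrix.mulVec a w := by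
    funext j
    exact Finset.sum_congr rfl fun i _ => by rw [posDef_symm ha i j]
  rw [this, quadLin_apply, quadInv_eq, inv_mulVec_cancel ha]
  rfl

lemma quadInv_symm {n : ℕ} {a : Matrix (Fin n) (Fin n) ℝ} (ha : a.PosDef) (u v : Fin n → ℝ) :
    quadInv a u v = quadInv a v u := by
  rw [quadInv_eq, quadInv_eq, dot_mulVec_symm ha.inv]

lemma quadLin_alph {n : ℕ} {a : Matrix (Fin n) (Fin n) ℝ} (ha : a.PosDef) {y : Fin n → ℝ}
    (hy : y ≠ 0) (u : Fin n → ℝ) : quadLin a u (fun j => pd (alph a) y j) = sVar a u y := by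
  have : (fun j => pd (alph a) y j) = (1 / alph a y) • (fun j => ∑ i, a i j * y i) := by
    funext j; rw [pd_alph ha hy]; simp; field_simp
  rw [this, map_smul, quadLin_lower ha, sVar, oneForm, smul_eq_mul]; field_simp

lemma quadLin_hl {n : ℕ} {a : Matrix (Fin n) (Fin n) ℝ} (ha : a.PosDef) {y : Fin n → ℝ}
    (hy : y ≠ 0) (u v : Fin n → ℝ) :
    quadLin a u (hl a v y) = quadInv a u v - sVar a u y * sVar a v y := by
  have : hl a v y = v - sVar a v y • (fun j => pd (alph a) y j) := by
    funext j; simp [hl]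
  rw [this, map_sub, map_smul, quadLin_alph ha hy, quadLin_apply, smul_eq_mul]; ring

lemma contrS_eq {n : ℕ} (a : (Fin n → ℝ) → Matrix (Fin n) (Fin n) ℝ)
    (v w : (Fin n → ℝ) → Fin n → ℝ) (x y : Fin n → ℝ) :
    contrS a v w x y = quadLin (a x) (w x) (s0low a v x y) := by
  rw [quadLin_apply, quadInv_eq]; rfl

/-- `X_j = h_{ij} G^i`. -/
def Xlow {n : ℕ} (a : (Fin n → ℝ) → Matrix (Fin n) (Fin n) ℝ) (x y : Fin n → ℝ) (j : Fin n) : ℝ :=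
  ∑ i, (a x i j - pd (alph (a x)) y i * pd (alph (a x)) y j) * alphaG a x y i

lemma Xlow_eq {n : ℕ} (a : (Fin n → ℝ) → Matrix (Fin n) (Fin n) ℝ) (x y : Fin n → ℝ) :
    Xlow a x y = (fun j => ∑ i, a x i j * alphaG a x y i)
      - (∑ i, pd (alph (a x)) y i * alphaG a x y i) • (fun j => pd (alph (a x)) y j) := by
  funext j
  simp only [Xlow, sub_mul, Finset.sum_sub_distrib, Pi.sub_apply, Pi.smul_apply, smul_eq_mul,
    Finset.sum_mul]
  congr 1
  exact Finset.sum_congr rfl fun i _ => by ring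

lemma quadLin_X {n : ℕ} {a : (Fin n → ℝ) → Matrix (Fin n) (Fin n) ℝ} {x y : Fin n → ℝ}
    (ha : (a x).PosDef) (hy : y ≠ 0) (u : Fin n → ℝ) :
    quadLin (a x) u (Xlow a x y) = ∑ i, u i * alphaG a x y i
      - sVar (a x) u y * ∑ i, pd (alph (a x)) y i * alphaG a x y i := by
  rw [Xlow_eq, map_sub, map_smul, quadLin_lower ha, quadLin_alph ha hy, smul_eq_mul]; ring

/-- derivative of `α` along `x` in the coordinate direction `j`. -/
lemma pd_alph_x {n : ℕ} {a : (Fin n → ℝ) → Matrix (Fin n) (Fin n) ℝ} {x : Fin n → ℝ}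
    (hd : ∀ i j, DifferentiableAt ℝ (fun z => a z i j) x)
    (ha : (a x).PosDef) {y : Fin n → ℝ} (hy : y ≠ 0) (j : Fin n) :
    pd (fun z => alph (a z) y) x j
      = (∑ i, ∑ k, pd (fun z => a z i k) x j * y i * y k) / (2 * alph (a x) y) := by
  rw [pd, (alph_hasFDerivAt_x hd ha hy).fderiv]
  simp only [smul_apply, sum_apply, smul_eq_mul]
  rw [one_div_mul_eq_div]
  congr 1
  exact Finset.sum_congr rfl fun i _ => Finset.sum_congr rfl fun k _ => by rw [pd]; ring

lemma mlow_eq {n : ℕ} {a : (Fin n → ℝ) → Matrix (Fin n) (Fin n) ℝ} {x : Fin n → ℝ}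
    (hd : ∀ i j, DifferentiableAt ℝ (fun z => a z i j) x)
    (ha : (a x).PosDef) {y : Fin n → ℝ} (hy : y ≠ 0) (j : Fin n) :
    mlow a x y j = 2 * ∑ i, fderiv ℝ (fun z => a z i j) x y * y i
      - 2 * alph (a x) y * pd (fun z => alph (a z) y) x j := by
  have hα := alph_pos ha hy
  rw [pd_alph_x hd ha hy, mul_div_cancel₀ _ (by positivity)]
  simp only [mlow, sub_mul, Finset.sum_sub_distrib, ← sum_pd, Finset.mul_sum, Finset.sum_mul]
  congr 1
  exact Finset.sum_congr rfl fun i _ => Finset.sum_congr rfl fun k _ => by ring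

lemma alph_x_along {n : ℕ} {a : (Fin n → ℝ) → Matrix (Fin n) (Fin n) ℝ} {x : Fin n → ℝ}
    (hd : ∀ i j, DifferentiableAt ℝ (fun z => a z i j) x)
    (ha : (a x).PosDef) {y : Fin n → ℝ} (hy : y ≠ 0) :
    fderiv ℝ (fun z => alph (a z) y) x y = 2 * ∑ i, pd (alph (a x)) y i * alphaG a x y i := by
  have hα := alph_pos ha hy
  have hA0 : 2 * alph (a x) y * fderiv ℝ (fun z => alph (a z) y) x y
      = ∑ j, (∑ i, fderiv ℝ (fun z => a z i j) x y * y i) * y j := by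
    rw [(alph_hasFDerivAt_x hd ha hy).fderiv]
    simp only [smul_apply, sum_apply, smul_eq_mul]
    rw [one_div_mul_eq_div, mul_div_cancel₀ _ (by positivity), Finset.sum_comm]
    refine Finset.sum_congr rfl fun i _ => ?_
    rw [Finset.sum_mul]
    exact Finset.sum_congr rfl fun k _ => by ring
  have hm : ∑ j, mlow a x y j * y j = 2 * alph (a x) y * fderiv ℝ (fun z => alph (a z) y) x y := by
    simp only [mlow_eq hd ha hy, sub_mul, Finset.sum_sub_distrib]
    simp only [mul_assoc, ← Finset.mul_sum]
    rw [sum_pd]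
    linarith
  have hG : alph (a x) y * ∑ i, pd (alph (a x)) y i * alphaG a x y i
      = (1 / 4) * ∑ j, mlow a x y j * y j := by
    have : ∀ j, (1 / 4) * (mlow a x y j * y j) = ∑ i, a x i j * alphaG a x y i * y j := by
      intro j
      rw [← Finset.sum_mul, lower_G ha]; ring
    rw [Finset.mul_sum, Finset.mul_sum]
    simp only [this]
    rw [Finset.sum_comm]
    refine Finset.sum_congr rfl fun i _ => ?_
    rw [pd_alph ha hy, ← mul_assoc, mul_div_cancel₀ _ hα.ne', Finset.sum_mul]
    exact Finset.sum_congr rfl fun k _ => by rw [posDef_symm ha i k]; ring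
  have : alph (a x) y * fderiv ℝ (fun z => alph (a z) y) x y
      = alph (a x) y * (2 * ∑ i, pd (alph (a x)) y i * alphaG a x y i) := by linarith
  exact mul_left_cancel₀ hα.ne' this

lemma oneForm_x_along {n : ℕ} {a : (Fin n → ℝ) → Matrix (Fin n) (Fin n) ℝ}
    {v : (Fin n → ℝ) → Fin n → ℝ} {x : Fin n → ℝ}
    (hd : ∀ i, DifferentiableAt ℝ (fun z => v z i) x) (y : Fin n → ℝ) :
    fderiv ℝ (fun z => oneForm (v z) y) x y
      = r00 a v x y + 2 * ∑ k, v x k * alphaG a x y k := by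
  rw [r00_eq, (oneForm_hasFDerivAt_x hd y).fderiv]
  simp only [sum_pd, smul_apply, sum_apply, smul_eq_mul, sub_add_cancel]
  exact Finset.sum_congr rfl fun k _ => by ring

lemma oneForm_E {n : ℕ} {a : (Fin n → ℝ) → Matrix (Fin n) (Fin n) ℝ}
    {v : (Fin n → ℝ) → Fin n → ℝ} {x : Fin n → ℝ}
    (hs : ∀ i j k, pd (fun z => a z i j) x k = pd (fun z => a z j i) x k)
    (hd : ∀ i, DifferentiableAt ℝ (fun z => v z i) x) (y : Fin n → ℝ) (j : Fin n) :
    fderiv ℝ (fun z => v z j) x y - pd (fun z => oneForm (v z) y) x j = 2 * s0low a v x y j := by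
  rw [s0low_eq hs, sum_pd]
  congr 1
  rw [pd, (oneForm_hasFDerivAt_x hd y).fderiv]
  simp [pd]

/-- The Rapcsák expression at a point, in covariant form. -/
lemma rapcsak {n : ℕ} {U : Set (Fin n → ℝ)} (hU : IsOpen U)
    {a : (Fin n → ℝ) → Matrix (Fin n) (Fin n) ℝ}
    (had : ∀ x ∈ U, ∀ i j, DifferentiableAt ℝ (fun x => a x i j) x)
    (haP : ∀ x ∈ U, (a x).PosDef)
    {bv gv : (Fin n → ℝ) → Fin n → ℝ}
    (hbd : ∀ x ∈ U, ∀ i, DifferentiableAt ℝ (fun x => bv x i) x)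
    (hgd : ∀ x ∈ U, ∀ i, DifferentiableAt ℝ (fun x => gv x i) x)
    {W : Set (ℝ × ℝ)} (hW : IsOpen W) {Ψ : ℝ → ℝ → ℝ}
    (hΨ : ContDiffOn ℝ (⊤ : ℕ∞) (fun p : ℝ × ℝ => Ψ p.1 p.2) W)
    (hmem : ∀ x ∈ U, ∀ y : Fin n → ℝ, y ≠ 0 → (sVar (a x) (bv x) y, sVar (a x) (gv x) y) ∈ W)
    {x : Fin n → ℝ} (hx : x ∈ U) {y : Fin n → ℝ} (hy : y ≠ 0) (j : Fin n)
    {p q : ℝ} (hp : sVar (a x) (bv x) y = p) (hq : sVar (a x) (gv x) y = q)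
    (hV : 0 < PiF Ψ p q) :
    (∑ k, pd (fun z => pd (Fm (a z) (bv z) (gv z) Ψ) y j) x k * y k)
        - pd (fun z => Fm (a z) (bv z) (gv z) Ψ y) x j =
    (2 * PiF Ψ p q / alph (a x) y) * (Xlow a x y j
      + ((alph (a x) y / PiF Ψ p q) •
          (Ds Ψ p q • s0low a bv x y + Dt Ψ p q • s0low a gv x y)) j
      + (1 / (2 * PiF Ψ p q)) *
        ((Ds (Ds Ψ) p q * hl (a x) (bv x) y j + Dt (Ds Ψ) p q * hl (a x) (gv x) y j)
            * (r00 a bv x y + 2 * quadLin (a x) (bv x) (Xlow a x y))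
        + (Dt (Ds Ψ) p q * hl (a x) (bv x) y j + Dt (Dt Ψ) p q * hl (a x) (gv x) y j)
            * (r00 a gv x y + 2 * quadLin (a x) (gv x) (Xlow a x y)))) := by
  have ha := haP x hx
  have hα := alph_pos ha hy
  have hm := hmem x hx y hy
  rw [hp, hq] at hm
  obtain ⟨d0, d1, d2, hst⟩ := smooth_facts hW hΨ hm
  have hA := alph_hasFDerivAt_x (had x hx) ha hy
  have hB := oneForm_hasFDerivAt_x (hbd x hx) y
  have hC := oneForm_hasFDerivAt_x (hgd x hx) y
  have hY : HasFDerivAt (fun z => ∑ i, a z i j * y i)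
      (∑ i, y i • fderiv ℝ (fun z => a z i j) x) x :=
    HasFDerivAt.fun_sum (u := Finset.univ) fun i _ => (had x hx i j).hasFDerivAt.mul_const (y i)
  have hsym : ∀ i j k, pd (fun z => a z i j) x k = pd (fun z => a z j i) x k := by
    intro i j k
    have : (fun z => a z i j) =ᶠ[nhds x] (fun z => a z j i) := by
      filter_upwards [hU.mem_nhds hx] with z hz
      exact posDef_symm (haP z hz) i j
    rw [pd, pd, this.fderiv_eq]
  -- first term
  have e1 : (fun z => pd (Fm (a z) (bv z) (gv z) Ψ) y j) =ᶠ[nhds x] fun w =>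
      PiF Ψ (oneForm (bv w) y / alph (a w) y) (oneForm (gv w) y / alph (a w) y)
          * ((∑ i, a w i j * y i) / alph (a w) y)
        + Ds Ψ (oneForm (bv w) y / alph (a w) y) (oneForm (gv w) y / alph (a w) y) * bv w j
        + Dt Ψ (oneForm (bv w) y / alph (a w) y) (oneForm (gv w) y / alph (a w) y) * gv w j := by
    filter_upwards [hU.mem_nhds hx] with z hz
    exact pd_Fm (haP z hz) hy (bv z) (gv z) (smooth_facts hW hΨ (hmem z hz y hy)).1 j
  rw [sum_pd, e1.fderiv_eq, N_hasFDerivAt hA hB hC hY (hbd x hx j).hasFDerivAt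
    (hgd x hx j).hasFDerivAt hα.ne' hp hq d0 d1 d2 hst y]
  -- second term
  have e2 : pd (fun z => Fm (a z) (bv z) (gv z) Ψ y) x j =
      PiF Ψ p q * pd (fun z => alph (a z) y) x j + Ds Ψ p q * pd (fun z => oneForm (bv z) y) x j
      + Dt Ψ p q * pd (fun z => oneForm (gv z) y) x j := by
    have h := F_hasFDerivAt (Ψ := Ψ) hA hB hC hα.ne' (by
      change DifferentiableAt ℝ _ (sVar (a x) (bv x) y, sVar (a x) (gv x) y)
      rw [hp, hq]; exact d0)
    have h2 : fderiv ℝ (fun z => Fm (a z) (bv z) (gv z) Ψ y) x = _ := h.fderiv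
    have hp' : oneForm (bv x) y / alph (a x) y = p := hp
    have hq' : oneForm (gv x) y / alph (a x) y = q := hq
    rw [hp', hq'] at h2
    rw [pd, h2, pd, pd, pd, hA.fderiv, hB.fderiv, hC.fderiv]
    simp only [add_apply, smul_apply, smul_eq_mul]
  rw [e2, ← hA.fderiv, ← hB.fderiv, ← hC.fderiv, alph_x_along (had x hx) ha hy,
    oneForm_x_along (a := a) (hbd x hx) y, oneForm_x_along (a := a) (hgd x hx) y]
  have hb' := oneForm_E hsym (hbd x hx) y j
  have hg' := oneForm_E hsym (hgd x hx) y j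
  have hY' : (∑ i, y i • fderiv ℝ (fun z => a z i j) x) y
      = (1 / 2) * mlow a x y j + alph (a x) y * pd (fun z => alph (a z) y) x j := by
    rw [mlow_eq (had x hx) ha hy]
    simp only [sum_apply, smul_apply, smul_eq_mul]
    have : ∑ i, y i * fderiv ℝ (fun z => a z i j) x y
      = ∑ i, fderiv ℝ (fun z => a z i j) x y * y i :=
      Finset.sum_congr rfl fun i _ => mul_comm _ _
    rw [this]; ring
  have hX : Xlow a x y j = (1 / 4) * mlow a x y j
      - (∑ i, pd (alph (a x)) y i * alphaG a x y i) * pd (alph (a x)) y j := by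
    rw [Xlow_eq, ← lower_G ha]; rfl
  rw [quadLin_X ha hy, quadLin_X ha hy, hX, hY', hp, hq, ← pd_alph ha hy j]
  simp only [hl, hp, hq, Pi.smul_apply, Pi.add_apply, smul_eq_mul]
  rw [sub_eq_iff_eq_add] at hb' hg'
  rw [hb', hg']
  field_simp
  ring

/-- characterization of projective flatness of the (α,β,γ)-metric. -/
theorem statement15
    (n : ℕ) (hn : 2 ≤ n)
    (U : Set (Fin n → ℝ)) (hU : IsOpen U)
    (a : (Fin n → ℝ) → Matrix (Fin n) (Fin n) ℝ)
    (haS : ∀ i j, ContDiffOn ℝ (⊤ : ℕ∞) (fun x => a x i j) U)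
    (haP : ∀ x ∈ U, (a x).PosDef)
    (bv gv : (Fin n → ℝ) → Fin n → ℝ)
    (hbS : ∀ i, ContDiffOn ℝ (⊤ : ℕ∞) (fun x => bv x i) U)
    (hgS : ∀ i, ContDiffOn ℝ (⊤ : ℕ∞) (fun x => gv x i) U)
    (b₀ g₀ : ℝ) (hb₀ : 0 < b₀) (hg₀ : 0 < g₀)
    (hb : ∀ x ∈ U, Real.sqrt (quadInv (a x) (bv x) (bv x)) < b₀)
    (hg : ∀ x ∈ U, Real.sqrt (quadInv (a x) (gv x) (gv x)) < g₀)
    (Ψ : ℝ → ℝ → ℝ)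
    (hΨ : ContDiffOn ℝ (⊤ : ℕ∞) (fun p : ℝ × ℝ => Ψ p.1 p.2)
      (Set.Ioo (-b₀) b₀ ×ˢ Set.Ioo (-g₀) g₀))
    (hΨpos : ∀ p ∈ Set.Ioo (-b₀) b₀ ×ˢ Set.Ioo (-g₀) g₀, 0 < Ψ p.1 p.2)
    (hPipos : ∀ x ∈ U, ∀ y : Fin n → ℝ, y ≠ 0 →
      0 < PiF Ψ (sVar (a x) (bv x) y) (sVar (a x) (gv x) y))
    (hΓpos : ∀ x ∈ U, ∀ y : Fin n → ℝ, y ≠ 0 →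
      0 < GammaF Ψ (quadInv (a x) (bv x) (bv x)) (quadInv (a x) (gv x) (gv x))
          (quadInv (a x) (bv x) (gv x)) (sVar (a x) (bv x) y) (sVar (a x) (gv x) y))
 :
    (∀ x ∈ U, ∀ y : Fin n → ℝ, y ≠ 0 → ∀ j : Fin n,
      (∑ k, pd (fun z => pd (Fm (a z) (bv z) (gv z) Ψ) y j) x k * y k)
        - pd (fun z => Fm (a z) (bv z) (gv z) Ψ y) x j = 0)
    ↔
    (∀ x ∈ U, ∀ y : Fin n → ℝ, y ≠ 0 → ∀ j : Fin n,
      ∀ p q Bq Gq Θq Rb Rg : ℝ,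
        p = sVar (a x) (bv x) y → q = sVar (a x) (gv x) y →
        Bq = quadInv (a x) (bv x) (bv x) → Gq = quadInv (a x) (gv x) (gv x) →
        Θq = quadInv (a x) (bv x) (gv x) →
        Rb = r00 a bv x y - (2 * alph (a x) y / PiF Ψ p q) *
            (Ds Ψ p q * contrS a bv bv x y + Dt Ψ p q * contrS a gv bv x y) →
        Rg = r00 a gv x y - (2 * alph (a x) y / PiF Ψ p q) *
            (Ds Ψ p q * contrS a bv gv x y + Dt Ψ p q * contrS a gv gv x y) →
        (∑ i, (a x i j - pd (alph (a x)) y i * pd (alph (a x)) y j) * alphaG a x y i)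
          + (alph (a x) y / PiF Ψ p q) *
              (Ds Ψ p q * s0low a bv x y j + Dt Ψ p q * s0low a gv x y j)
          + (1 / (2 * GammaF Ψ Bq Gq Θq p q)) *
              (((Ds (Ds Ψ) p q + (Gq - q ^ 2) * JF Ψ p q) * Rb
                    + (Dt (Ds Ψ) p q - (Θq - p * q) * JF Ψ p q) * Rg)
                  * hl (a x) (bv x) y j
                + ((Dt (Dt Ψ) p q + (Bq - p ^ 2) * JF Ψ p q) * Rg
                    + (Dt (Ds Ψ) p q - (Θq - p * q) * JF Ψ p q) * Rb)
                  * hl (a x) (gv x) y j) = 0) := by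
  have had : ∀ x ∈ U, ∀ i j, DifferentiableAt ℝ (fun x => a x i j) x := fun x hx i j =>
    ((haS i j x hx).contDiffAt (hU.mem_nhds hx)).differentiableAt (by simp)
  have hbd : ∀ x ∈ U, ∀ i, DifferentiableAt ℝ (fun x => bv x i) x := fun x hx i =>
    ((hbS i x hx).contDiffAt (hU.mem_nhds hx)).differentiableAt (by simp)
  have hgd : ∀ x ∈ U, ∀ i, DifferentiableAt ℝ (fun x => gv x i) x := fun x hx i =>
    ((hgS i x hx).contDiffAt (hU.mem_nhds hx)).differentiableAt (by simp)
  have hmem : ∀ x ∈ U, ∀ y : Fin n → ℝ, y ≠ 0 → (sVar (a x) (bv x) y, sVar (a x) (gv x) y) ∈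
      Set.Ioo (-b₀) b₀ ×ˢ Set.Ioo (-g₀) g₀ := fun x hx y hy =>
    ⟨sVar_mem (haP x hx) hy hb₀ (hb x hx), sVar_mem (haP x hx) hy hg₀ (hg x hx)⟩
  have hW : IsOpen (Set.Ioo (-b₀) b₀ ×ˢ Set.Ioo (-g₀) g₀) := isOpen_Ioo.prod isOpen_Ioo
  refine forall_congr' fun x => forall_congr' fun hx => forall_congr' fun y =>
    forall_congr' fun hy => ?_
  have ha := haP x hx
  have hα := alph_pos ha hy
  have hV := hPipos x hx y hy
  have hΓ := hΓpos x hx y hy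
  obtain ⟨p, hp⟩ : ∃ p, p = sVar (a x) (bv x) y := ⟨_, rfl⟩
  obtain ⟨q, hq⟩ : ∃ q, q = sVar (a x) (gv x) y := ⟨_, rfl⟩
  rw [← hp, ← hq] at hV hΓ
  have hE := fun j => rapcsak hU had haP hbd hgd hW hΨ hmem hx hy j hp.symm hq.symm hV
  have hcore := la_core (quadLin (a x) (bv x)) (quadLin (a x) (gv x)) (Xlow a x y)
    ((alph (a x) y / PiF Ψ p q) • (Ds Ψ p q • s0low a bv x y + Dt Ψ p q • s0low a gv x y))
    (hl (a x) (bv x) y) (hl (a x) (gv x) y)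
    (V := PiF Ψ p q) (P := Ds (Ds Ψ) p q) (Q := Dt (Ds Ψ) p q) (T := Dt (Dt Ψ) p q)
    (A := quadInv (a x) (bv x) (bv x) - p ^ 2) (C := quadInv (a x) (bv x) (gv x) - p * q)
    (D := quadInv (a x) (gv x) (gv x) - q ^ 2) (r := r00 a bv x y) (r' := r00 a gv x y)
    (J := JF Ψ p q) hV hΓ rfl rfl
    (by rw [quadLin_hl ha hy, ← hp]; ring) (by rw [quadLin_hl ha hy, ← hp, ← hq])
    (by rw [quadLin_hl ha hy, ← hp, ← hq, quadInv_symm ha]; ring)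
    (by rw [quadLin_hl ha hy, ← hq]; ring) rfl rfl
  have hL : (∀ j : Fin n, (∑ k, pd (fun z => pd (Fm (a z) (bv z) (gv z) Ψ) y j) x k * y k)
        - pd (fun z => Fm (a z) (bv z) (gv z) Ψ y) x j = 0) ↔ _ :=
    (forall_congr' fun j => by
      rw [hE j, mul_eq_zero, or_iff_right (by positivity)]).trans hcore
  rw [hL]
  refine forall_congr' fun j => ?_
  constructor
  · intro h p' q' B G Θ Rb Rg hp' hq' hB hG hΘ hRb hRg
    rw [← hp] at hp'
    rw [← hq] at hq'
    subst hp' hq' hB hG hΘ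
    rw [← h, hRb, hRg]
    simp only [contrS_eq, map_smul, map_add, smul_eq_mul, Pi.smul_apply, Pi.add_apply, Xlow]
    ring
  · intro h
    rw [← h p q _ _ _ _ _ hp hq rfl rfl rfl rfl rfl]
    simp only [contrS_eq, map_smul, map_add, smul_eq_mul, Pi.smul_apply, Pi.add_apply, Xlow]
    ring
end
end

section
/- Consider the (α,β,γ)-metric F(x,y) = α·e^{β/α} + γ on U × (ℝⁿ∖{0}). Assume √(b²(x)) < 1 and √(g²(x)) < e^{−1} for all x ∈ U (so F > 0 and F is a Finsler metric), and assume that the 1-form β is nowhere zero on U (i.e. (b_i(x)) ≠ 0 for every x). If F is projectively flat on U, i.e. (∂²F/∂x^k∂y^j)·y^k − ∂F/∂x^j = 0 on U × (ℝⁿ∖{0}) for every j, then β is parallel with respect to α, i.e. b_{i|j} = 0 on U for all i,j, and γ is closed, i.e. ^γs_{ij} = 0 on U for all i,j (equivalently ∂γ_i/∂x^j = ∂γ_j/∂x^i). -/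
noncomputable section

open Set

namespace Aux17
section
open Filter Topology

lemma cosh_lower {s : ℝ} (hs : s ≠ 0) : 1 + s^2/2 + s^4/24 < Real.cosh s := by
  have h := sum_le_hasSum (Finset.range 4) (fun i _ => by
    rw [pow_mul]; positivity) (Real.hasSum_cosh s)
  have h6 : 0 < s^6 := by positivity
  simp [Finset.sum_range_succ, Nat.factorial] at h
  linarith

lemma cosh_upper {s : ℝ} (hs : |s| ≤ 1) : Real.cosh s ≤ 1 + s^2/2 + s^4/24 + s^6 := by
  have h1 := Real.exp_bound hs (n := 6) (by norm_num)
  have h2 := Real.exp_bound (x := -s) (by simpa using hs) (n := 6) (by norm_num)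
  have h3 : |s|^6 = s^6 := by rw [← abs_pow]; exact abs_of_nonneg (by positivity)
  rw [abs_neg] at h2
  rw [h3] at h1 h2
  have h6 : 0 ≤ s^6 := by positivity
  have h1' := (abs_le.1 h1).2
  have h2' := (abs_le.1 h2).2
  simp [Finset.sum_range_succ, Nat.factorial] at h1' h2'
  rw [Real.cosh_eq]
  nlinarith

lemma trans_lemma (T A P : Polynomial ℝ) (hA : ∀ t, 0 < A.eval t) (hTA : T.degree < A.degree)
    (c : ℝ) (hc : c ≠ 0) (hA0 : 0 < A.degree)
    (h : ∀ t, T.eval t * (A.eval t)^2 * Real.cosh (c / √(A.eval t)) = P.eval t) (t : ℝ) :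
    T.eval t = 0 := by
  set Q : Polynomial ℝ := P - T * (A^2 + Polynomial.C (c^2/2) * A + Polynomial.C (c^4/24)) with hQ
  set E : ℝ → ℝ := fun t => Real.cosh (c / √(A.eval t)) -
    (1 + (c / √(A.eval t))^2/2 + (c / √(A.eval t))^4/24) with hE
  have hp2 : ∀ t, (c / √(A.eval t))^2 = c^2 / A.eval t := fun t => by
    rw [div_pow, Real.sq_sqrt (hA t).le]
  have hp4 : ∀ t, (c / √(A.eval t))^4 = c^4 / (A.eval t)^2 := fun t => by
    rw [div_pow, show (√(A.eval t))^4 = (√(A.eval t)^2)^2 by ring, Real.sq_sqrt (hA t).le]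
  have hp6 : ∀ t, (c / √(A.eval t))^6 = c^6 / (A.eval t)^3 := fun t => by
    rw [div_pow, show (√(A.eval t))^6 = (√(A.eval t)^2)^3 by ring, Real.sq_sqrt (hA t).le]
  have hQE : ∀ t, Q.eval t = T.eval t * ((A.eval t)^2 * E t) := fun t => by
    have := (hA t).ne'
    simp only [hQ, hE, Polynomial.eval_sub, Polynomial.eval_mul, Polynomial.eval_add,
      Polynomial.eval_pow, Polynomial.eval_C, ← h t, hp2, hp4]
    field_simp
  have hlim : Tendsto (fun t => T.eval t / A.eval t) atTop (𝓝 0) :=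
    Polynomial.div_tendsto_atTop_zero_of_degree_lt _ _ hTA
  have hAlim : Tendsto (fun t => (Polynomial.C (c^2)).eval t / A.eval t) atTop (𝓝 0) :=
    Polynomial.div_tendsto_atTop_zero_of_degree_lt _ _ (lt_of_le_of_lt Polynomial.degree_C_le hA0)
  have hQlim : Tendsto (fun t => Q.eval t) atTop (𝓝 0) := by
    have hl2 : Tendsto (fun t => c^6 * |T.eval t / A.eval t|) atTop (𝓝 0) := by
      simpa using (hlim.abs).const_mul (c^6)
    refine squeeze_zero_norm' ?_ hl2
    have hev := hAlim.eventually (gt_mem_nhds (show (0:ℝ) < 1 by norm_num))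
    filter_upwards [hev] with t ht
    have hAt := hA t
    have hs : |c / √(A.eval t)| ≤ 1 := by
      rw [← sq_le_one_iff_abs_le_one, hp2]
      simpa using ht.le
    have hu := cosh_upper hs
    have hl := cosh_lower (s := c / √(A.eval t)) (div_ne_zero hc (Real.sqrt_pos.2 hAt).ne')
    have hE1 : 0 ≤ E t := by simp only [hE]; linarith
    have hE2 : E t ≤ c^6 / (A.eval t)^3 := by rw [← hp6]; simp only [hE]; linarith
    rw [hQE, norm_mul, Real.norm_eq_abs, Real.norm_eq_abs, abs_of_nonneg (mul_nonneg (sq_nonneg _) hE1),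
      abs_div, abs_of_pos hAt]
    calc |T.eval t| * ((A.eval t)^2 * E t) ≤ |T.eval t| * ((A.eval t)^2 * (c^6 / (A.eval t)^3)) := by
          gcongr
      _ = _ := by field_simp
  have hQ0 : Q = 0 := by
    obtain ⟨h1, -⟩ := (Polynomial.tendsto_nhds_iff (P := Q)).1 hQlim
    simpa using h1
  have h0 := hQE t
  rw [hQ0] at h0
  have hEt : 0 < E t := by
    have hl := cosh_lower (s := c / √(A.eval t)) (div_ne_zero hc (Real.sqrt_pos.2 (hA t)).ne')
    simp only [hE]; linarith
  have := hA t
  have h00 : T.eval t * ((A.eval t)^2 * E t) = 0 := by simpa using h0.symm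
  exact (mul_eq_zero.1 h00).resolve_right (by positivity)

lemma hasFDerivAt_quot {E : Type*} [NormedAddCommGroup E] [NormedSpace ℝ E] {f g : E → ℝ}
    {f' g' : E →L[ℝ] ℝ} {x : E} (hf : HasFDerivAt f f' x) (hg : HasFDerivAt g g' x) (h0 : g x ≠ 0) :
    HasFDerivAt (fun w => f w / g w) ((g x)⁻¹ • f' - (f x / (g x)^2) • g') x := by
  have h := hf.fun_mul ((hasDerivAt_inv h0).comp_hasFDerivAt x hg)
  have e : (fun w => f w / g w) = fun w => f w * (Inv.inv ∘ g) w := by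
    funext w; simp [div_eq_mul_inv]
  rw [e]
  refine h.congr_fderiv ?_
  ext v
  simp
  ring

lemma calc1 {E : Type*} [NormedAddCommGroup E] [NormedSpace ℝ E] {A B C : E → ℝ} {A' B' C' : E →L[ℝ] ℝ} {x : E} (hA : HasFDerivAt A A' x)
    (hB : HasFDerivAt B B' x) (hC : HasFDerivAt C C' x) (hp : 0 < A x) (v : E) :
    fderiv ℝ (fun w => √(A w) * Real.exp (B w / √(A w)) + C w) x v =
    Real.exp (B x / √(A x)) * ((1 - B x / √(A x)) * (A' v / 2) / √(A x) + B' v) + C' v := by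
  have hs := Real.sqrt_pos.2 hp
  have hα := hA.sqrt hp.ne'
  have h := (hα.fun_mul ((hasFDerivAt_quot hB hα hs.ne').exp)).fun_add hC
  rw [h.fderiv]
  simp
  field_simp
  ring

lemma calc2 {E : Type*} [NormedAddCommGroup E] [NormedSpace ℝ E] {A B C L b : E → ℝ} {A' B' C' L' b' : E →L[ℝ] ℝ} {x : E} (hA : HasFDerivAt A A' x)
    (hB : HasFDerivAt B B' x) (hC : HasFDerivAt C C' x) (hL : HasFDerivAt L L' x) (hb : HasFDerivAt b b' x) (hp : 0 < A x) (v : E) :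
    fderiv ℝ (fun w => Real.exp (B w / √(A w)) * ((1 - B w / √(A w)) * L w / √(A w) + b w) + C w) x v =
    Real.exp (B x / √(A x)) * ((B' v - B x * (A' v / 2) / A x) / √(A x) * (b x - B x * L x / A x) 
      + (1 - B x / √(A x)) * (L' v - L x * (A' v / 2) / A x) / √(A x) + b' v) + C' v := by
  have hs := Real.sqrt_pos.2 hp
  have hss : A x = √(A x) ^ 2 := (Real.sq_sqrt hp.le).symm
  have hα := hA.sqrt hp.ne'
  have hq := hasFDerivAt_quot hB hα hs.ne'
  have h := (hq.exp.fun_mul ((hasFDerivAt_quot ((hq.const_sub 1).fun_mul hL) hα hs.ne').fun_add hb)).fun_add hC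
  rw [h.fderiv]
  simp
  generalize √(A x) = α at *
  rw [hss]
  field_simp
  ring
open Matrix
lemma exists_ker {n : ℕ} (hn : 2 ≤ n) (b : Fin n → ℝ) : ∃ v : Fin n → ℝ, v ≠ 0 ∧ b ⬝ᵥ v = 0 := by
  have : Nontrivial (Fin n) := Fin.nontrivial_iff_two_le.2 hn
  by_cases h : b ⟨0, by omega⟩ = 0
  · refine ⟨Pi.single ⟨0, by omega⟩ 1, by simp, by simp [h]⟩
  · refine ⟨Pi.single ⟨1, by omega⟩ (b ⟨0, by omega⟩) - Pi.single ⟨0, by omega⟩ (b ⟨1, by omega⟩), ?_, ?_⟩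
    · intro h0
      have := congrFun h0 ⟨1, by omega⟩
      simp at this
      exact h this
    · simp [dotProduct_sub]; ring

lemma core {n : ℕ} (hn : 2 ≤ n) (a : Matrix (Fin n) (Fin n) ℝ) (ha : a.PosDef)
    (b : Fin n → ℝ) (hb : b ≠ 0) (N : (Fin n → ℝ) → Fin n → ℝ) (DB N0 : (Fin n → ℝ) → ℝ)
    (R : Matrix (Fin n) (Fin n) ℝ)
    (hR : ∀ y, y ⬝ᵥ R *ᵥ y = DB y - (a⁻¹ *ᵥ b) ⬝ᵥ N y)
    (hP : ∀ y, y ≠ 0 → ∀ j,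
      ((y ⬝ᵥ a *ᵥ y) * DB y - (b ⬝ᵥ y) * N0 y) * ((y ⬝ᵥ a *ᵥ y) * b j - (b ⬝ᵥ y) * (a *ᵥ y) j)
       + (y ⬝ᵥ a *ᵥ y) * ((y ⬝ᵥ a *ᵥ y) * N y j - (a *ᵥ y) j * N0 y) = 0)
    (hQ : ∀ y, y ≠ 0 → ∀ j,
      (b ⬝ᵥ y) * ((y ⬝ᵥ a *ᵥ y) * N y j - (a *ᵥ y) j * N0 y)
        = ((R - Rᵀ) *ᵥ y) j * (y ⬝ᵥ a *ᵥ y)^2) :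
    R = 0 := by
  set u := a⁻¹ *ᵥ b with hu
  have hT : aᵀ = a := by simpa using ha.isHermitian.eq
  have hdet : IsUnit a.det := (Matrix.isUnit_iff_isUnit_det a).1 ha.isUnit
  have hau : a *ᵥ u = b := by rw [hu, mulVec_mulVec, Matrix.mul_nonsing_inv a hdet, one_mulVec]
  have hpos : ∀ y, y ≠ 0 → 0 < y ⬝ᵥ a *ᵥ y := fun y hy => by
    simpa using ha.dotProduct_mulVec_pos hy
  have hsym : ∀ y z, y ⬝ᵥ a *ᵥ z = z ⬝ᵥ a *ᵥ y := fun y z => by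
    rw [dotProduct_mulVec, ← mulVec_transpose, hT, dotProduct_comm]
  have hu0 : u ≠ 0 := by
    intro h; rw [h, mulVec_zero] at hau; exact hb hau.symm
  set m := b ⬝ᵥ u with hm
  have hmA : u ⬝ᵥ a *ᵥ u = m := by rw [hau, hm, dotProduct_comm]
  have hmpos : 0 < m := by rw [← hmA]; exact hpos u hu0
  have hub : ∀ y, u ⬝ᵥ a *ᵥ y = b ⬝ᵥ y := fun y => by rw [hsym, hau, dotProduct_comm]
  -- contractions
  have hP' : ∀ y, y ≠ 0 → 
      ((y ⬝ᵥ a *ᵥ y) * DB y - (b ⬝ᵥ y) * N0 y) * ((y ⬝ᵥ a *ᵥ y) * m - (b ⬝ᵥ y) * (b ⬝ᵥ y))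
       + (y ⬝ᵥ a *ᵥ y) * ((y ⬝ᵥ a *ᵥ y) * (u ⬝ᵥ N y) - (b ⬝ᵥ y) * N0 y) = 0 := by
    intro y hy
    have h : ((y ⬝ᵥ a *ᵥ y) * DB y - (b ⬝ᵥ y) * N0 y) • ((y ⬝ᵥ a *ᵥ y) • b - (b ⬝ᵥ y) • (a *ᵥ y))
       + (y ⬝ᵥ a *ᵥ y) • ((y ⬝ᵥ a *ᵥ y) • N y - N0 y • (a *ᵥ y)) = 0 := by
      ext j
      have := hP y hy j
      simp only [Pi.add_apply, Pi.smul_apply, Pi.sub_apply, smul_eq_mul, Pi.zero_apply]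
      linarith
    have h' := congrArg (fun w => u ⬝ᵥ w) h
    simp only [dotProduct_add, dotProduct_smul, dotProduct_sub, smul_eq_mul, hub, dotProduct_zero,
      dotProduct_comm u b, ← hm] at h'
    linarith
  have hQ' : ∀ y, y ≠ 0 → 
      (b ⬝ᵥ y) * ((y ⬝ᵥ a *ᵥ y) * (u ⬝ᵥ N y) - (b ⬝ᵥ y) * N0 y)
        = (u ⬝ᵥ ((R - Rᵀ) *ᵥ y)) * (y ⬝ᵥ a *ᵥ y)^2 := by
    intro y hy
    have h : (b ⬝ᵥ y) • ((y ⬝ᵥ a *ᵥ y) • N y - N0 y • (a *ᵥ y))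
        = (y ⬝ᵥ a *ᵥ y)^2 • ((R - Rᵀ) *ᵥ y) := by
      ext j
      have := hQ y hy j
      simp only [Pi.smul_apply, Pi.sub_apply, smul_eq_mul]
      linarith
    have h' := congrArg (fun w => u ⬝ᵥ w) h
    simp only [dotProduct_smul, dotProduct_sub, smul_eq_mul, hub] at h'
    linarith
  have hE : ∀ y, y ≠ 0 →
      (u ⬝ᵥ ((R - Rᵀ) *ᵥ y)) * (y ⬝ᵥ a *ᵥ y) * ((y ⬝ᵥ a *ᵥ y) * (1 + m) - (b ⬝ᵥ y)^2) +
       (b ⬝ᵥ y) * (y ⬝ᵥ R *ᵥ y) * ((y ⬝ᵥ a *ᵥ y) * m - (b ⬝ᵥ y)^2) = 0 := by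
    intro y hy
    have h1 := hP' y hy
    have h2 := hQ' y hy
    have h3 := hR y
    have hA := (hpos y hy).ne'
    generalize y ⬝ᵥ a *ᵥ y = A at *
    generalize b ⬝ᵥ y = B at *
    generalize u ⬝ᵥ N y = nu at *
    generalize u ⬝ᵥ ((R - Rᵀ) *ᵥ y) = S at *
    have hd : DB y = y ⬝ᵥ R *ᵥ y + nu := by linarith
    rw [hd] at h1
    generalize y ⬝ᵥ R *ᵥ y = r at *
    apply mul_left_cancel₀ hA
    linear_combination B * h1 - (A * (1+m) - B^2) * h2
  have hskew : u ⬝ᵥ ((R - Rᵀ) *ᵥ u) = 0 := by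
    rw [sub_mulVec, dotProduct_sub, mulVec_transpose, dotProduct_comm u (u ᵥ* R), ← dotProduct_mulVec, sub_self]
  have hline : ∀ v, b ⬝ᵥ v = 0 → v ≠ 0 → u ⬝ᵥ R *ᵥ u = 0 ∧ u ⬝ᵥ R *ᵥ v + v ⬝ᵥ R *ᵥ u = 0 ∧ v ⬝ᵥ R *ᵥ v = 0 := by
    intro v hv hv0
    have hq := hpos v hv0
    have hB : ∀ t : ℝ, b ⬝ᵥ (u + t • v) = m := fun t => by simp [dotProduct_add, hv, ← hm]
    have hne : ∀ t : ℝ, u + t • v ≠ 0 := fun t h => by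
      have := hB t
      rw [h] at this
      simp at this
      linarith
    have hvu : v ⬝ᵥ b = 0 := by rw [dotProduct_comm, hv]
    have hf := fun t : ℝ => hE (u + t • v) (hne t)
    simp only [hB] at hf
    simp only [mulVec_add, mulVec_smul, add_dotProduct, smul_dotProduct, dotProduct_add, dotProduct_smul, smul_eq_mul,
      hskew, hau, hub, hv, hvu, ← hm, dotProduct_comm u b] at hf
    generalize v ⬝ᵥ a *ᵥ v = q at *
    generalize u ⬝ᵥ ((R - Rᵀ) *ᵥ v) = σ at *
    generalize u ⬝ᵥ R *ᵥ u = ρ0 at *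
    generalize u ⬝ᵥ R *ᵥ v = ρ1 at *
    generalize v ⬝ᵥ R *ᵥ u = ρ1' at *
    generalize v ⬝ᵥ R *ᵥ v = ρ2 at *
    have f1 := hf 1
    have f2 := hf (-1)
    have f3 := hf 2
    have f4 := hf (-2)
    have f5 := hf 3
    have f6 := hf (-3)
    clear hf
    ring_nf at f1 f2 f3 f4 f5 f6
    have hσ : σ * m ^2 = 0 := by linarith
    have hσ0 : σ = 0 := by simpa [hmpos.ne'] using hσ
    subst hσ0
    have g0 : ρ0 * (m^2 * q) = 0 := by linarith
    have g1 : (ρ1 + ρ1') * (m^2 * q) = 0 := by linarith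
    have g2 : ρ2 * (m^2 * q) = 0 := by linarith
    have hmq : m^2*q ≠ 0 := by positivity
    exact ⟨(mul_eq_zero.1 g0).resolve_right hmq, (mul_eq_zero.1 g1).resolve_right hmq, (mul_eq_zero.1 g2).resolve_right hmq⟩
  have hline' : ∀ v, b ⬝ᵥ v = 0 → u ⬝ᵥ R *ᵥ u = 0 ∧ u ⬝ᵥ R *ᵥ v + v ⬝ᵥ R *ᵥ u = 0 ∧ v ⬝ᵥ R *ᵥ v = 0 := by
    intro v hv
    by_cases h : v = 0
    · subst h
      obtain ⟨w, hw0, hw⟩ := exists_ker hn b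
      exact ⟨(hline w hw hw0).1, by simp, by simp⟩
    · exact hline v hv h
  have hdec : ∀ y, ∃ c : ℝ, ∃ v, b ⬝ᵥ v = 0 ∧ y = c • u + v := fun y =>
    ⟨(b ⬝ᵥ y) / m, y - ((b ⬝ᵥ y) / m) • u, by
      rw [dotProduct_sub, dotProduct_smul, ← hm, smul_eq_mul]; field_simp; ring, by simp⟩
  have hr : ∀ y, y ⬝ᵥ R *ᵥ y = 0 := by
    intro y
    obtain ⟨c, v, hv, rfl⟩ := hdec y
    obtain ⟨h1, h2, h3⟩ := hline' v hv
    simp only [mulVec_add, mulVec_smul, add_dotProduct, smul_dotProduct, dotProduct_add, dotProduct_smul, smul_eq_mul]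
    linear_combination c^2 * h1 + c * h2 + h3
  have hS : ∀ y, y ≠ 0 → (R - Rᵀ) *ᵥ y = 0 := by
    intro y hy
    have hA := hpos y hy
    have hCS : 0 ≤ (y ⬝ᵥ a *ᵥ y) * m - (b ⬝ᵥ y)^2 := by
      obtain ⟨c, v, hv, rfl⟩ := hdec y
      have hvu : v ⬝ᵥ b = 0 := by rw [dotProduct_comm, hv]
      have hq : 0 ≤ v ⬝ᵥ a *ᵥ v := by simpa using ha.posSemidef.dotProduct_mulVec_nonneg v
      simp only [mulVec_add, mulVec_smul, add_dotProduct, smul_dotProduct, dotProduct_add, dotProduct_smul, smul_eq_mul,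
        hau, hub, hv, hvu, ← hm, dotProduct_comm u b]
      nlinarith [mul_nonneg hq hmpos.le]
    have h1 := hP' y hy
    have h3 := hR y
    rw [hr y] at h3
    have hK : ((y ⬝ᵥ a *ᵥ y) * DB y - (b ⬝ᵥ y) * N0 y) * ((y ⬝ᵥ a *ᵥ y) * m - (b ⬝ᵥ y)^2 + (y ⬝ᵥ a *ᵥ y)) = 0 := by
      linear_combination h1 - (y ⬝ᵥ a *ᵥ y)^2 * h3
    have hK0 := (mul_eq_zero.1 hK).resolve_right (by positivity)
    ext j
    have h4 := hP y hy j
    rw [hK0, zero_mul, zero_add] at h4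
    have h5 := (mul_eq_zero.1 h4).resolve_left hA.ne'
    have h6 := hQ y hy j
    rw [h5, mul_zero] at h6
    simpa [hA.ne'] using h6.symm
  have hS' : R = Rᵀ := by
    rw [← sub_eq_zero]
    ext i j
    have := congrFun (hS (Pi.single j 1) (by simp)) i
    simpa using this
  ext i j
  have h1 := hr (Pi.single i 1 + Pi.single j 1)
  have h2 := hr (Pi.single i 1)
  have h3 := hr (Pi.single j 1)
  simp [mulVec_add, add_dotProduct, dotProduct_add] at h1 h2 h3
  have h4 : R i j = R j i := congrFun (congrFun hS' i) j
  simp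
  linarith
lemma parity {A B D N0 L N S T b : ℝ} (hA : 0 < A)
   (E1 : Real.exp (B / √A) * ((D - B * N0 / A) / √A * (b - B * L / A) + (1 - B / √A) * (N - L * N0 / A) / √A + S) + T = 0)
   (E2 : Real.exp (-B / √A) * ((D - B * N0 / A) / √A * (b - B * L / A) + (1 + B / √A) * (N - L * N0 / A) / √A - S) - T = 0) :
   (T * A^2 * Real.cosh (B / √A) = B * (A * N - L * N0) - S * A^2) ∧
   (T = 0 → (A * D - B * N0) * (A * b - B * L) + A * (A * N - L * N0) = 0) := by
  have hs := Real.sqrt_pos.2 hA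
  have hss : √A ^ 2 = A := (Real.sq_sqrt hA.le)
  have hm : Real.exp (B / √A) * Real.exp (-B / √A) = 1 := by
    rw [← Real.exp_add, neg_div, add_neg_cancel, Real.exp_zero]
  rw [Real.cosh_eq, ← neg_div]
  generalize Real.exp (B / √A) = e at *
  generalize Real.exp (-B / √A) = e' at *
  set P := (D - B * N0 / A) / √A * (b - B * L / A) + (N - L * N0 / A) / √A with hP
  set Q := S - B / √A * (N - L * N0 / A) / √A with hQ
  have F1 : P + Q = - T * e' := by
    have : e * (P + Q) + T = 0 := by rw [← E1]; simp only [hP, hQ]; ring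
    linear_combination e' * this - (P + Q) * hm
  have F2 : P - Q = T * e := by
    have : e' * (P - Q) - T = 0 := by rw [← E2]; simp only [hP, hQ]; ring
    linear_combination e * this - (P - Q) * hm
  have hQA : Q * A^2 = S * A^2 - B * (A * N - L * N0) := by
    have : Q = S - B * (N - L * N0 / A) / (√A ^2) := by
      rw [hQ]; field_simp
    rw [this, hss]
    field_simp
  have hPA : P * √A * A^2 = (A * D - B * N0) * (A * b - B * L) + A * (A * N - L * N0) := by
    rw [hP]
    field_simp
  constructor
  · clear_value P Q; linear_combination (1/2) * A^2 * (F1 - F2) - hQA 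
  · intro hT
    subst hT
    have : P = 0 := by linarith
    rw [← hPA, this]; ring

/-- polynomial functions of one real variable -/
def IsPoly (f : ℝ → ℝ) : Prop := ∃ P : Polynomial ℝ, ∀ t, f t = P.eval t

lemma IsPoly.const (c : ℝ) : IsPoly (fun _ => c) := ⟨Polynomial.C c, by simp⟩
lemma IsPoly.aff (c d : ℝ) : IsPoly (fun t => c + t * d) :=
  ⟨Polynomial.C c + Polynomial.X * Polynomial.C d, fun t => by simp; ring⟩
lemma IsPoly.add {f g : ℝ → ℝ} (hf : IsPoly f) (hg : IsPoly g) : IsPoly (fun t => f t + g t) := by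
  obtain ⟨P, hP⟩ := hf
  obtain ⟨Q, hQ⟩ := hg
  exact ⟨P + Q, by simp [hP, hQ]⟩
lemma IsPoly.sub {f g : ℝ → ℝ} (hf : IsPoly f) (hg : IsPoly g) : IsPoly (fun t => f t - g t) := by
  obtain ⟨P, hP⟩ := hf
  obtain ⟨Q, hQ⟩ := hg
  exact ⟨P - Q, by simp [hP, hQ]⟩
lemma IsPoly.mul {f g : ℝ → ℝ} (hf : IsPoly f) (hg : IsPoly g) : IsPoly (fun t => f t * g t) := by
  obtain ⟨P, hP⟩ := hf
  obtain ⟨Q, hQ⟩ := hg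
  exact ⟨P * Q, by simp [hP, hQ]⟩
lemma IsPoly.sum {n : ℕ} {f : Fin n → ℝ → ℝ} (hf : ∀ i, IsPoly (f i)) :
    IsPoly (fun t => ∑ i, f i t) := by
  choose P hP using hf
  exact ⟨∑ i, P i, fun t => by simp [hP, Polynomial.eval_finsetSum]⟩
lemma IsPoly.lin {n : ℕ} (φ : (Fin n → ℝ) →L[ℝ] ℝ) (u v : Fin n → ℝ) :
    IsPoly (fun t => φ (u + t • v)) := by
  simpa using IsPoly.aff (φ u) (φ v)
lemma IsPoly.coord {n : ℕ} (u v : Fin n → ℝ) (i : Fin n) :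
    IsPoly (fun t => (u + t • v) i) := by
  simpa using IsPoly.aff (u i) (v i)

lemma quad_eq {n : ℕ} (a : Matrix (Fin n) (Fin n) ℝ) (y : Fin n → ℝ) :
    ∑ i, ∑ j, a i j * y i * y j = y ⬝ᵥ a *ᵥ y := by
  simp only [dotProduct, mulVec, Finset.mul_sum]
  exact Finset.sum_congr rfl fun i _ => Finset.sum_congr rfl fun j _ => by ring

lemma one_eq {n : ℕ} (b y : Fin n → ℝ) : oneForm b y = b ⬝ᵥ y := rfl

lemma fderiv_sum {n : ℕ} (f : (Fin n → ℝ) → ℝ) (x y : Fin n → ℝ) :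
    ∑ k, pd f x k * y k = fderiv ℝ f x y := by
  conv_rhs => rw [pi_eq_sum_univ' y]
  rw [map_sum]
  refine Finset.sum_congr rfl fun k _ => ?_
  rw [pd, mul_comm, ← smul_eq_mul, ← map_smul]

/-- The vertical derivative of `F`. -/
lemma vert {n : ℕ} (a : Matrix (Fin n) (Fin n) ℝ) (ha : a.PosDef) (b c y : Fin n → ℝ) (hy : y ≠ 0)
    (j : Fin n) :
    pd (fun w => alph a w * Real.exp (oneForm b w / alph a w) + oneForm c w) y j =
    Real.exp (oneForm b y / √(∑ i, ∑ k, a i k * y i * y k)) *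
     ((1 - oneForm b y / √(∑ i, ∑ k, a i k * y i * y k)) * (∑ k, a j k * y k)
        / √(∑ i, ∑ k, a i k * y i * y k) + b j) + c j := by
  have hT : ∀ i k, a i k = a k i := fun i k => by
    have := ha.isHermitian.apply k i
    simpa using this
  have hpos : 0 < ∑ i, ∑ k, a i k * y i * y k := by
    rw [quad_eq]; simpa using ha.dotProduct_mulVec_pos hy
  have hlin : ∀ d : Fin n → ℝ, HasFDerivAt (fun w => oneForm d w)
      (∑ i, d i • (ContinuousLinearMap.proj i : (Fin n → ℝ) →L[ℝ] ℝ)) y := fun d => by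
    unfold oneForm
    exact HasFDerivAt.fun_sum fun i _ => (hasFDerivAt_apply i y).const_mul (d i)
  have hA : HasFDerivAt (fun w : Fin n → ℝ => ∑ i, ∑ k, a i k * w i * w k)
      (∑ i, ∑ k, ((a i k * y i) • (ContinuousLinearMap.proj k : (Fin n → ℝ) →L[ℝ] ℝ) +
        y k • (a i k • (ContinuousLinearMap.proj i : (Fin n → ℝ) →L[ℝ] ℝ)))) y :=
    HasFDerivAt.fun_sum fun i _ => HasFDerivAt.fun_sum fun k _ =>
      ((hasFDerivAt_apply i y).const_mul (a i k)).fun_mul (hasFDerivAt_apply k y)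
  have h := calc1 hA (hlin b) (hlin c) hpos (Pi.single j 1)
  have e1 : ∀ d : Fin n → ℝ, (∑ i, d i • (ContinuousLinearMap.proj i : (Fin n → ℝ) →L[ℝ] ℝ)) (Pi.single j 1) = d j := by
    intro d
    simp [Pi.single_apply]
  have e2 : (∑ i, ∑ k, ((a i k * y i) • (ContinuousLinearMap.proj k : (Fin n → ℝ) →L[ℝ] ℝ) +
        y k • (a i k • (ContinuousLinearMap.proj i : (Fin n → ℝ) →L[ℝ] ℝ)))) (Pi.single j 1) / 2
        = ∑ k, a j k * y k := by
    simp [Pi.single_apply, Finset.sum_add_distrib]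
    simp only [← Finset.sum_add_distrib, Finset.sum_div]
    refine Finset.sum_congr rfl fun k _ => ?_
    rw [hT k j]; ring
  rw [e1, e1, e2] at h
  exact h

section main
variable {n : ℕ} (a : (Fin n → ℝ) → Matrix (Fin n) (Fin n) ℝ) (bv : (Fin n → ℝ) → Fin n → ℝ) (x : Fin n → ℝ)

/-- `Γ_{j00}` -/
def NN (y : Fin n → ℝ) (j : Fin n) : ℝ :=
  ∑ l, fderiv ℝ (fun z => a z j l) x y * y l
    - (∑ i, ∑ l, fderiv ℝ (fun z => a z i l) x (Pi.single j 1) * y i * y l) / 2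
/-- `Γ_{000}` -/
def N0 (y : Fin n → ℝ) : ℝ := (∑ i, ∑ l, fderiv ℝ (fun z => a z i l) x y * y i * y l) / 2
/-- `b_{i,k} y^i y^k` -/
def DB (y : Fin n → ℝ) : ℝ := ∑ i, fderiv ℝ (fun z => bv z i) x y * y i
/-- `(b_{j,k} - b_{k,j}) y^k` -/
def SS (y : Fin n → ℝ) (j : Fin n) : ℝ :=
  fderiv ℝ (fun z => bv z j) x y - ∑ i, fderiv ℝ (fun z => bv z i) x (Pi.single j 1) * y i

lemma reduced (cv : (Fin n → ℝ) → Fin n → ℝ) (U : Set (Fin n → ℝ)) (hU : IsOpen U) (hx : x ∈ U)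
    (haP : ∀ x ∈ U, (a x).PosDef)
    (haD : ∀ i j, DifferentiableAt ℝ (fun z => a z i j) x)
    (hbD : ∀ i, DifferentiableAt ℝ (fun z => bv z i) x)
    (hcD : ∀ i, DifferentiableAt ℝ (fun z => cv z i) x)
    (y : Fin n → ℝ) (hy : y ≠ 0) (j : Fin n)
    (h : (∑ k, pd (fun z =>
          pd (fun w => alph (a z) w * Real.exp (oneForm (bv z) w / alph (a z) w)
            + oneForm (cv z) w) y j) x k * y k)
        - pd (fun z => alph (a z) y * Real.exp (oneForm (bv z) y / alph (a z) y)
            + oneForm (cv z) y) x j = 0) :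
    Real.exp (bv x ⬝ᵥ y / √(y ⬝ᵥ a x *ᵥ y)) *
      ((DB bv x y - bv x ⬝ᵥ y * N0 a x y / (y ⬝ᵥ a x *ᵥ y)) / √(y ⬝ᵥ a x *ᵥ y) *
        (bv x j - bv x ⬝ᵥ y * (a x *ᵥ y) j / (y ⬝ᵥ a x *ᵥ y))
       + (1 - bv x ⬝ᵥ y / √(y ⬝ᵥ a x *ᵥ y)) * (NN a x y j - (a x *ᵥ y) j * N0 a x y / (y ⬝ᵥ a x *ᵥ y))
          / √(y ⬝ᵥ a x *ᵥ y) + SS bv x y j) + SS cv x y j = 0 := by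
  rw [fderiv_sum] at h
  have hev : (fun z => pd (fun w => alph (a z) w * Real.exp (oneForm (bv z) w / alph (a z) w)
            + oneForm (cv z) w) y j) =ᶠ[𝓝 x] fun z => 
      Real.exp (oneForm (bv z) y / √(∑ i, ∑ k, a z i k * y i * y k)) *
     ((1 - oneForm (bv z) y / √(∑ i, ∑ k, a z i k * y i * y k)) * (∑ k, a z j k * y k)
        / √(∑ i, ∑ k, a z i k * y i * y k) + bv z j) + cv z j := by
    filter_upwards [hU.mem_nhds hx] with z hz
    exact vert (a z) (haP z hz) (bv z) (cv z) y hy j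
  rw [hev.fderiv_eq] at h
  have hpos : 0 < ∑ i, ∑ k, a x i k * y i * y k := by
    rw [quad_eq]; simpa using (haP x hx).dotProduct_mulVec_pos hy
  have hA : HasFDerivAt (fun z => ∑ i, ∑ k, a z i k * y i * y k)
      (∑ i, ∑ k, y k • (y i • fderiv ℝ (fun z => a z i k) x)) x :=
    HasFDerivAt.fun_sum fun i _ => HasFDerivAt.fun_sum fun k _ =>
      (((haD i k).hasFDerivAt.mul_const (y i)).mul_const (y k))
  have hL : HasFDerivAt (fun z => ∑ k, a z j k * y k)
      (∑ k, y k • fderiv ℝ (fun z => a z j k) x) x :=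
    HasFDerivAt.fun_sum fun k _ => (haD j k).hasFDerivAt.mul_const (y k)
  have hB : HasFDerivAt (fun z => oneForm (bv z) y)
      (∑ k, y k • fderiv ℝ (fun z => bv z k) x) x :=
    HasFDerivAt.fun_sum fun k _ => (hbD k).hasFDerivAt.mul_const (y k)
  have hC : HasFDerivAt (fun z => oneForm (cv z) y)
      (∑ k, y k • fderiv ℝ (fun z => cv z k) x) x :=
    HasFDerivAt.fun_sum fun k _ => (hcD k).hasFDerivAt.mul_const (y k)
  have h1 := calc2 hA hB (hcD j).hasFDerivAt hL (hbD j).hasFDerivAt hpos y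
  have h2 := calc1 hA hB hC hpos (Pi.single j 1)
  have h2' : pd (fun z => alph (a z) y * Real.exp (oneForm (bv z) y / alph (a z) y)
            + oneForm (cv z) y) x j = _ := h2
  rw [h1, h2'] at h
  have eA : ∀ v, (∑ i, ∑ k, y k • (y i • fderiv ℝ (fun z => a z i k) x)) v =
      ∑ i, ∑ k, fderiv ℝ (fun z => a z i k) x v * y i * y k := fun v => by
    simp only [_root_.sum_apply, _root_.smul_apply, smul_eq_mul]
    exact Finset.sum_congr rfl fun i _ => Finset.sum_congr rfl fun k _ => by ring
  have eL : ∀ (f : Fin n → (Fin n → ℝ) → ℝ) v, (∑ k, y k • fderiv ℝ (f k) x) v =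
      ∑ k, fderiv ℝ (f k) x v * y k := fun f v => by
    simp only [_root_.sum_apply, _root_.smul_apply, smul_eq_mul]
    exact Finset.sum_congr rfl fun k _ => by ring
  rw [eA, eA, eL (fun k z => bv z k), eL (fun k z => bv z k), eL (fun k z => cv z k),
    eL (fun k z => a z j k)] at h
  have eLj : ∑ k, a x j k * y k = (a x *ᵥ y) j := rfl
  rw [quad_eq, one_eq, eLj] at h
  rw [← h]
  simp only [NN, N0, DB, SS]
  ring

lemma NN_neg (y j) : NN a x (-y) j = NN a x y j := by simp [NN]
lemma N0_neg (y) : N0 a x (-y) = - N0 a x y := by simp [N0, neg_div]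
lemma DB_neg (y) : DB bv x (-y) = DB bv x y := by simp [DB]
lemma SS_neg (y j) : SS bv x (-y) j = - SS bv x y j := by simp [SS]; ring
lemma SS_add (y z j) : SS bv x (y + z) j = SS bv x y j + SS bv x z j := by
  simp [SS, mul_add, Finset.sum_add_distrib]; ring
lemma SS_smul (c : ℝ) (y j) : SS bv x (c • y) j = c * SS bv x y j := by
  simp [SS, mul_sub, Finset.mul_sum]
  exact Finset.sum_congr rfl fun k _ => by ring

lemma chr_symm (hs : ∀ i j k, pd (fun z => a z i j) x k = pd (fun z => a z j i) x k) (k i j : Fin n) :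
    chr a x k i j = chr a x k j i := by
  unfold chr
  congr 1
  refine Finset.sum_congr rfl fun l _ => ?_
  rw [hs i j l]; ring

lemma covD_skew (hs : ∀ i j k, pd (fun z => a z i j) x k = pd (fun z => a z j i) x k) (i j : Fin n) :
    covD a bv x i j - covD a bv x j i = pd (fun z => bv z i) x j - pd (fun z => bv z j) x i := by
  simp only [covD, chr_symm a x hs _ i j]; ring

lemma SS_eq (hs : ∀ i j k, pd (fun z => a z i j) x k = pd (fun z => a z j i) x k) (y : Fin n → ℝ) (j : Fin n) :
    ((Matrix.of (covD a bv x) - (Matrix.of (covD a bv x))ᵀ) *ᵥ y) j = SS bv x y j := by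
  rw [SS, ← fderiv_sum, ← Finset.sum_sub_distrib]
  simp only [mulVec, dotProduct, Matrix.sub_apply, Matrix.of_apply, Matrix.transpose_apply,
    covD_skew a bv x hs]
  exact Finset.sum_congr rfl fun k _ => by simp only [pd]; ring

lemma R_eq (haS : ((a x)⁻¹)ᵀ = (a x)⁻¹) (hs : ∀ i j k, pd (fun z => a z i j) x k = pd (fun z => a z j i) x k) (y : Fin n → ℝ) :
    y ⬝ᵥ (Matrix.of (covD a bv x)) *ᵥ y = DB bv x y - ((a x)⁻¹ *ᵥ bv x) ⬝ᵥ NN a x y := by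
  rw [← quad_eq]
  have e1 : DB bv x y = ∑ i, ∑ j, pd (fun z => bv z i) x j * y i * y j := by
    simp only [DB, ← fderiv_sum, Finset.sum_mul]
    exact Finset.sum_congr rfl fun i _ => Finset.sum_congr rfl fun k _ => by ring
  have e2 : ∀ l, NN a x y l = ∑ i, ∑ j, (1/2) * (pd (fun z => a z j l) x i + pd (fun z => a z i l) x j - pd (fun z => a z i j) x l) * y i * y j := by
    intro l
    have f1 : ∑ i, fderiv ℝ (fun z => a z l i) x y * y i = ∑ i, ∑ j, pd (fun z => a z i l) x j * y i * y j := by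
      simp only [← fderiv_sum, Finset.sum_mul]
      exact Finset.sum_congr rfl fun i _ => Finset.sum_congr rfl fun k _ => by rw [hs l i]; ring
    have f2 : ∑ i, fderiv ℝ (fun z => a z l i) x y * y i = ∑ i, ∑ j, pd (fun z => a z j l) x i * y i * y j := by
      rw [f1, Finset.sum_comm]
      exact Finset.sum_congr rfl fun i _ => Finset.sum_congr rfl fun k _ => by ring
    have f3 : NN a x y l = (1/2) * ((∑ i, fderiv ℝ (fun z => a z l i) x y * y i) + (∑ i, fderiv ℝ (fun z => a z l i) x y * y i)
       - ∑ i, ∑ j, pd (fun z => a z i j) x l * y i * y j) := by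
      simp only [NN, pd]; ring
    rw [f3]
    nth_rw 1 [f2]
    rw [f1]
    simp only [← Finset.sum_add_distrib, ← Finset.sum_sub_distrib, Finset.mul_sum]
    exact Finset.sum_congr rfl fun i _ => Finset.sum_congr rfl fun k _ => by ring
  have e3 : ∀ i j, ∑ k, bv x k * chr a x k i j = ∑ l, ((a x)⁻¹ *ᵥ bv x) l * ((1/2) * (pd (fun z => a z j l) x i + pd (fun z => a z i l) x j - pd (fun z => a z i j) x l)) := by
    intro i j
    simp only [chr, Finset.mul_sum, mulVec, dotProduct, Finset.sum_mul]
    rw [Finset.sum_comm]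
    refine Finset.sum_congr rfl fun l _ => Finset.sum_congr rfl fun k _ => ?_
    have : (a x)⁻¹ k l = (a x)⁻¹ l k := congrFun (congrFun haS l) k
    rw [this]; ring
  have e4 : ((a x)⁻¹ *ᵥ bv x) ⬝ᵥ NN a x y = ∑ i, ∑ j, (∑ k, bv x k * chr a x k i j) * y i * y j := by
    simp only [e3, dotProduct, e2, Finset.mul_sum, Finset.sum_mul]
    rw [Finset.sum_comm]
    refine Finset.sum_congr rfl fun i _ => ?_
    rw [Finset.sum_comm]
    exact Finset.sum_congr rfl fun i _ => Finset.sum_congr rfl fun k _ => by ring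
  rw [e1, e4]
  simp only [← Finset.sum_sub_distrib]
  exact Finset.sum_congr rfl fun i _ => Finset.sum_congr rfl fun k _ => by
    simp only [Matrix.of_apply, covD]; ring

lemma T_zero (hn : 2 ≤ n) (cv : (Fin n → ℝ) → Fin n → ℝ) (haP : (a x).PosDef) (hb : bv x ≠ 0) (j : Fin n)
    (h : ∀ y, y ≠ 0 → SS cv x y j * (y ⬝ᵥ a x *ᵥ y)^2 * Real.cosh (bv x ⬝ᵥ y / √(y ⬝ᵥ a x *ᵥ y)) =
      bv x ⬝ᵥ y * ((y ⬝ᵥ a x *ᵥ y) * NN a x y j - (a x *ᵥ y) j * N0 a x y) - SS bv x y j * (y ⬝ᵥ a x *ᵥ y)^2)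
    (y : Fin n → ℝ) : SS cv x y j = 0 := by
  have hpos : ∀ y, y ≠ 0 → 0 < y ⬝ᵥ a x *ᵥ y := fun y hy => by
    simpa using haP.dotProduct_mulVec_pos hy
  have key : ∀ u, bv x ⬝ᵥ u ≠ 0 → SS cv x u j = 0 := by
    intro u hu
    obtain ⟨v, hv0, hv⟩ := exists_ker hn (bv x)
    have hB : ∀ t : ℝ, bv x ⬝ᵥ (u + t • v) = bv x ⬝ᵥ u := fun t => by simp [dotProduct_add, hv]
    have hne : ∀ t : ℝ, u + t • v ≠ 0 := fun t h0 => by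
      have := hB t
      rw [h0] at this
      simp at this
      exact hu this.symm
    have hL : ∀ i, IsPoly (fun t => (a x *ᵥ (u + t • v)) i) := fun i => by
      simpa [mulVec_add, mulVec_smul] using IsPoly.aff ((a x *ᵥ u) i) ((a x *ᵥ v) i)
    have hA : IsPoly (fun t => (u + t • v) ⬝ᵥ a x *ᵥ (u + t • v)) := by
      unfold dotProduct
      exact IsPoly.sum fun i => (IsPoly.coord u v i).mul (hL i)
    have hN : IsPoly (fun t => NN a x (u + t • v) j) := by
      simp only [NN, div_eq_mul_inv]
      refine IsPoly.sub (IsPoly.sum fun i => (IsPoly.lin _ u v).mul (IsPoly.coord u v i)) (IsPoly.mul ?_ (IsPoly.const _))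
      exact IsPoly.sum fun i => IsPoly.sum fun l => ((IsPoly.const _).mul (IsPoly.coord u v i)).mul (IsPoly.coord u v l)
    have hN0 : IsPoly (fun t => N0 a x (u + t • v)) := by
      simp only [N0, div_eq_mul_inv]
      refine IsPoly.mul ?_ (IsPoly.const _)
      exact IsPoly.sum fun i => IsPoly.sum fun l => ((IsPoly.lin _ u v).mul (IsPoly.coord u v i)).mul (IsPoly.coord u v l)
    have hS : IsPoly (fun t => SS bv x (u + t • v) j) := by
      simpa [SS_add, SS_smul] using IsPoly.aff (SS bv x u j) (SS bv x v j)
    obtain ⟨P, hP⟩ := ((IsPoly.const (bv x ⬝ᵥ u)).mul ((hA.mul hN).sub ((hL j).mul hN0))).sub (hS.mul (hA.mul hA))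
    set T : Polynomial ℝ := Polynomial.C (SS cv x v j) * Polynomial.X + Polynomial.C (SS cv x u j) with hT
    set A : Polynomial ℝ := Polynomial.C (v ⬝ᵥ a x *ᵥ v) * Polynomial.X^2 +
      Polynomial.C (u ⬝ᵥ a x *ᵥ v + v ⬝ᵥ a x *ᵥ u) * Polynomial.X + Polynomial.C (u ⬝ᵥ a x *ᵥ u) with hAdef
    have hTe : ∀ t, T.eval t = SS cv x (u + t • v) j := fun t => by
      simp [hT, SS_add, SS_smul]; ring
    have hAe : ∀ t, A.eval t = (u + t • v) ⬝ᵥ a x *ᵥ (u + t • v) := fun t => by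
      simp [hAdef, mulVec_add, mulVec_smul, add_dotProduct, smul_dotProduct, dotProduct_add, dotProduct_smul]; ring
    have hAdeg : A.degree = 2 := Polynomial.degree_quadratic (hpos v hv0).ne'
    have hTdeg : T.degree ≤ 1 := Polynomial.degree_linear_le
    have := trans_lemma T A P (fun t => by rw [hAe]; exact hpos _ (hne t))
      (by rw [hAdeg]; exact lt_of_le_of_lt hTdeg (by norm_num)) (bv x ⬝ᵥ u) hu (by rw [hAdeg]; norm_num)
      (fun t => by
        have := h _ (hne t)
        rw [hB] at this
        rw [hTe, hAe, this, ← hP]; ring) 0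
    rw [hTe] at this
    simpa using this
  by_cases hy : bv x ⬝ᵥ y = 0
  · have hbb : bv x ⬝ᵥ bv x ≠ 0 := by simpa using hb
    have h1 := key (bv x) hbb
    have h2 := key (y + bv x) (by rw [dotProduct_add, hy, zero_add]; exact hbb)
    rw [SS_add, h1, add_zero] at h2
    exact h2
  · exact key y hy

end main

lemma final
    (n : ℕ) (hn : 2 ≤ n)
    (U : Set (Fin n → ℝ)) (hU : IsOpen U)
    (a : (Fin n → ℝ) → Matrix (Fin n) (Fin n) ℝ)
    (haS : ∀ i j, ContDiffOn ℝ (⊤ : ℕ∞) (fun x => a x i j) U)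
    (haP : ∀ x ∈ U, (a x).PosDef)
    (bv gv : (Fin n → ℝ) → Fin n → ℝ)
    (hbS : ∀ i, ContDiffOn ℝ (⊤ : ℕ∞) (fun x => bv x i) U)
    (hgS : ∀ i, ContDiffOn ℝ (⊤ : ℕ∞) (fun x => gv x i) U)
    (hb1 : ∀ x ∈ U, Real.sqrt (quadInv (a x) (bv x) (bv x)) < 1)
    (hg1 : ∀ x ∈ U, Real.sqrt (quadInv (a x) (gv x) (gv x)) < Real.exp (-1))
    (hbne : ∀ x ∈ U, bv x ≠ 0)
    (hpf : ∀ x ∈ U, ∀ y : Fin n → ℝ, y ≠ 0 → ∀ j : Fin n,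
      (∑ k, pd (fun z =>
          pd (fun w => alph (a z) w * Real.exp (oneForm (bv z) w / alph (a z) w)
            + oneForm (gv z) w) y j) x k * y k)
        - pd (fun z => alph (a z) y * Real.exp (oneForm (bv z) y / alph (a z) y)
            + oneForm (gv z) y) x j = 0) :
    ∀ x ∈ U, ∀ i j : Fin n, covD a bv x i j = 0 ∧ sSym a gv x i j = 0 := by
  intro x hx
  have hnh := hU.mem_nhds hx
  have haD : ∀ i j, DifferentiableAt ℝ (fun z => a z i j) x := fun i j =>
    ((haS i j).contDiffAt hnh).differentiableAt (by simp)
  have hbD : ∀ i, DifferentiableAt ℝ (fun z => bv z i) x := fun i =>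
    ((hbS i).contDiffAt hnh).differentiableAt (by simp)
  have hgD : ∀ i, DifferentiableAt ℝ (fun z => gv z i) x := fun i =>
    ((hgS i).contDiffAt hnh).differentiableAt (by simp)
  have hs : ∀ i j k, pd (fun z => a z i j) x k = pd (fun z => a z j i) x k := by
    intro i j k
    unfold pd
    have : (fun z => a z i j) =ᶠ[nhds x] fun z => a z j i := by
      filter_upwards [hnh] with z hz
      have := (haP z hz).isHermitian.apply j i
      simpa using this
    rw [this.fderiv_eq]
  have hinvT : ((a x)⁻¹)ᵀ = (a x)⁻¹ := by
    simpa using (haP x hx).inv.isHermitian.eq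
  have hpos : ∀ y, y ≠ 0 → 0 < y ⬝ᵥ a x *ᵥ y := fun y hy => by
    simpa using (haP x hx).dotProduct_mulVec_pos hy
  have hred := fun y hy j => Aux17.reduced a bv x gv U hU hx haP haD hbD hgD y hy j (hpf x hx y hy j)
  have hpar := fun (y : Fin n → ℝ) (hy : y ≠ 0) (j : Fin n) =>
    Aux17.parity (A := y ⬝ᵥ a x *ᵥ y) (B := bv x ⬝ᵥ y) (D := Aux17.DB bv x y) (N0 := Aux17.N0 a x y)
      (L := (a x *ᵥ y) j) (N := Aux17.NN a x y j) (S := Aux17.SS bv x y j) (T := Aux17.SS gv x y j)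
      (b := bv x j) (hpos y hy) (hred y hy j) (by
        have h := hred (-y) (neg_ne_zero.2 hy) j
        simp only [Aux17.NN_neg, Aux17.N0_neg, Aux17.DB_neg, Aux17.SS_neg, Matrix.mulVec_neg,
          dotProduct_neg, neg_dotProduct, neg_neg, Pi.neg_apply, neg_mul_neg, neg_div,
          sub_neg_eq_add] at h
        rw [← h, neg_div]; ring)
  have hT : ∀ j y, Aux17.SS gv x y j = 0 := fun j y =>
    Aux17.T_zero a bv x hn gv (haP x hx) (hbne x hx) j (fun y hy => (hpar y hy j).1) y
  have hR := Aux17.core hn (a x) (haP x hx) (bv x) (hbne x hx) (Aux17.NN a x) (Aux17.DB bv x)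
    (Aux17.N0 a x) (Matrix.of (covD a bv x)) (Aux17.R_eq a bv x hinvT hs)
    (fun y hy j => (hpar y hy j).2 (hT j y))
    (fun y hy j => by
      have h := (hpar y hy j).1
      rw [hT j y] at h
      rw [Aux17.SS_eq a bv x hs]
      linarith)
  intro i j
  refine ⟨congrFun (congrFun hR i) j, ?_⟩
  have h := hT i (Pi.single j 1)
  rw [← Aux17.SS_eq a gv x hs] at h
  simp at h
  rw [sSym]
  linarith

end
end Aux17

/-- if `F = α e^{β/α} + γ` is projectively flat then `β` is parallel and `γ` is closed. -/
theorem statement17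
    (n : ℕ) (hn : 2 ≤ n)
    (U : Set (Fin n → ℝ)) (hU : IsOpen U)
    (a : (Fin n → ℝ) → Matrix (Fin n) (Fin n) ℝ)
    (haS : ∀ i j, ContDiffOn ℝ (⊤ : ℕ∞) (fun x => a x i j) U)
    (haP : ∀ x ∈ U, (a x).PosDef)
    (bv gv : (Fin n → ℝ) → Fin n → ℝ)
    (hbS : ∀ i, ContDiffOn ℝ (⊤ : ℕ∞) (fun x => bv x i) U)
    (hgS : ∀ i, ContDiffOn ℝ (⊤ : ℕ∞) (fun x => gv x i) U)
    (hb1 : ∀ x ∈ U, Real.sqrt (quadInv (a x) (bv x) (bv x)) < 1)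
    (hg1 : ∀ x ∈ U, Real.sqrt (quadInv (a x) (gv x) (gv x)) < Real.exp (-1))
    (hbne : ∀ x ∈ U, bv x ≠ 0)
    (hpf : ∀ x ∈ U, ∀ y : Fin n → ℝ, y ≠ 0 → ∀ j : Fin n,
      (∑ k, pd (fun z =>
          pd (fun w => alph (a z) w * Real.exp (oneForm (bv z) w / alph (a z) w)
            + oneForm (gv z) w) y j) x k * y k)
        - pd (fun z => alph (a z) y * Real.exp (oneForm (bv z) y / alph (a z) y)
            + oneForm (gv z) y) x j = 0) :
    ∀ x ∈ U, ∀ i j : Fin n, covD a bv x i j = 0 ∧ sSym a gv x i j = 0 := by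
  exact Aux17.final n hn U hU a haS haP bv gv hbS hgS hb1 hg1 hbne hpf
end
end
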